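/- arXiv:1203.2823 — 6 statements merged into one kernel-verified Lean document; each statement's English description precedes it below -/
import Mathlib

section
/- For every positive integer n, the 3-adic valuation of the sum ∑_{k=0}^{n-1} C(2k,k) equals 2·ν₃(n) + ν₃(C(2n,n)). -/
open Finset

/-- The odd and even parts of `(1+√-3)^N`: recurrences. -/
lemma aux_even (N M : ℕ) (h : N < 2 * M + 1) :
    ∑ k ∈ range (M + 1), ((N + 1).choose (2 * k) : ℤ) * (-3) ^ k =
      ∑ k ∈ range (M + 1), (N.choose (2 * k) : ℤ) * (-3) ^ k
      - 3 * ∑ k ∈ range (M + 1), (N.choose (2 * k + 1) : ℤ) * (-3) ^ k := by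
  rw [sum_range_succ', sum_range_succ' (fun k => (N.choose (2 * k) : ℤ) * (-3) ^ k),
    sum_range_succ (fun k => (N.choose (2 * k + 1) : ℤ) * (-3) ^ k),
    Nat.choose_eq_zero_of_lt h]
  have : ∀ k ∈ range M, ((N + 1).choose (2 * (k + 1)) : ℤ) * (-3) ^ (k + 1) =
      (N.choose (2 * (k + 1)) : ℤ) * (-3) ^ (k + 1)
        - 3 * ((N.choose (2 * k + 1) : ℤ) * (-3) ^ k) := by
    intro k _
    rw [show 2 * (k + 1) = (2 * k + 1) + 1 by ring, Nat.choose_succ_succ']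
    push_cast
    ring
  rw [sum_congr rfl this, sum_sub_distrib, ← mul_sum]
  simp
  ring

lemma aux_odd (N M : ℕ) :
    ∑ k ∈ range M, ((N + 1).choose (2 * k + 1) : ℤ) * (-3) ^ k =
      ∑ k ∈ range M, (N.choose (2 * k) : ℤ) * (-3) ^ k
      + ∑ k ∈ range M, (N.choose (2 * k + 1) : ℤ) * (-3) ^ k := by
  rw [← sum_add_distrib]
  refine sum_congr rfl fun k _ => ?_
  rw [Nat.choose_succ_succ']
  push_cast
  ring

lemma aux_zero (M n : ℕ) (h : 3 * n < 2 * M + 1) :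
    ∑ k ∈ range (M + 1), ((3 * n).choose (2 * k + 1) : ℤ) * (-3) ^ k = 0 := by
  induction n with
  | zero => simp
  | succ n ih =>
    have ih := ih (by omega)
    rw [show 3 * (n + 1) = 3 * n + 1 + 1 + 1 by ring, aux_odd, aux_odd, aux_odd,
      aux_even _ _ (by omega), aux_even _ _ (by omega), aux_odd, ih]
    ring

lemma aux_sum_pow (m M : ℕ) (h : m < M) :
    ∑ k ∈ range M, (m.choose k : ℚ_[3]) * 3 ^ k = 4 ^ m := by
  have : (4 : ℚ_[3]) ^ m = (3 + 1) ^ m := by norm_num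
  rw [this, add_pow]
  symm
  rw [← sum_subset (range_subset_range.2 (show m + 1 ≤ M by omega))]
  · exact sum_congr rfl fun k _ => by simp [mul_comm]
  · intro k _ hk
    rw [Nat.choose_eq_zero_of_lt (by simpa using hk)]
    simp

lemma odd_ne (k : ℕ) : (2 * (k : ℚ_[3]) + 1) ≠ 0 := by
  have : ((2 * k + 1 : ℕ) : ℚ_[3]) ≠ 0 := Nat.cast_ne_zero.2 (by omega)
  simpa using this

lemma h_rec (m M : ℕ) (h : m + 1 < M) :
    (2 * (m : ℚ_[3]) + 3) * ∑ k ∈ range M, 3 ^ k / (2 * (k : ℚ_[3]) + 1) * ((m + 1).choose k) =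
      2 * (m + 1) * ∑ k ∈ range M, 3 ^ k / (2 * (k : ℚ_[3]) + 1) * (m.choose k) + 4 ^ (m + 1) := by
  rw [← aux_sum_pow (m + 1) M h, mul_sum, mul_sum, ← sum_add_distrib]
  refine sum_congr rfl fun k _ => ?_
  have h0 := odd_ne k
  have h1 : (m.choose k : ℚ_[3]) * (m + 1) = (m + 1).choose k * (m + 1 - k) := by
    rcases le_or_gt k (m + 1) with hk | hk
    · have := congrArg (Nat.cast : ℕ → ℚ_[3]) (Nat.choose_mul_succ_eq m k)
      push_cast [Nat.cast_sub hk] at this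
      exact this
    · rw [Nat.choose_eq_zero_of_lt hk, Nat.choose_eq_zero_of_lt (by omega)]; simp
  field_simp
  linear_combination (-2) * h1

lemma main_id (m M : ℕ) (h : m < M) :
    ((∑ k ∈ range (m + 1), (2 * k).choose k : ℕ) : ℚ_[3]) * 2 * 4 ^ m =
      (m + 1) * ((2 * (m + 1)).choose (m + 1)) *
        ∑ k ∈ range M, 3 ^ k / (2 * (k : ℚ_[3]) + 1) * (m.choose k) := by
  induction m with
  | zero =>
    obtain ⟨M, rfl⟩ : ∃ M', M = M' + 1 := ⟨M - 1, by omega⟩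
    rw [sum_range_succ' (fun k : ℕ => 3 ^ k / (2 * (k : ℚ_[3]) + 1) * (Nat.choose 0 k))]
    simp
  | succ m ih =>
    have ih := ih (by omega)
    have hr := h_rec m M h
    rw [sum_range_succ]
    have hc := congrArg (Nat.cast : ℕ → ℚ_[3]) (Nat.succ_mul_centralBinom_succ (m + 1))
    simp only [Nat.centralBinom] at hc
    push_cast at hc ih ⊢
    generalize ∑ k ∈ range M, 3 ^ k / (2 * (k : ℚ_[3]) + 1) * ((m + 1).choose k) = H1 at *
    generalize ∑ k ∈ range M, 3 ^ k / (2 * (k : ℚ_[3]) + 1) * (m.choose k) = H0 at *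
    rw [pow_succ] at hr ⊢
    linear_combination 4 * ih - H1 * hc - 2 * ((2 * (m + 1)).choose (m + 1) : ℚ_[3]) * hr

lemma norm_nat_ge (j : ℕ) (hj : 0 < j) : ‖(j : ℚ_[3])‖⁻¹ ≤ j := by
  have hj' : (j : ℚ_[3]) ≠ 0 := Nat.cast_ne_zero.2 hj.ne'
  rw [Padic.norm_eq_zpow_neg_valuation hj', Padic.valuation_natCast, zpow_neg, inv_inv,
    zpow_natCast]
  exact_mod_cast Nat.le_of_dvd hj pow_padicValNat_dvd

lemma D_bound (m k : ℕ) (B : ℝ) (hB : 0 ≤ B)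
    (h : ∀ j : ℕ, 0 < j → j ≤ k → ‖(j : ℚ_[3])‖⁻¹ ≤ B) :
    ‖(m.choose k : ℚ_[3]) - (-1) ^ k‖ ≤ B * ‖((m + 1 : ℕ) : ℚ_[3])‖ := by
  induction k with
  | zero => simp; positivity
  | succ k ih =>
    have ih := ih fun j h1 h2 => h j h1 (by omega)
    have e : (m.choose (k + 1) : ℚ_[3]) - (-1) ^ (k + 1) =
        (m + 1).choose (k + 1) - ((m.choose k : ℚ_[3]) - (-1) ^ k) := by
      rw [Nat.choose_succ_succ']; push_cast; ring
    have hk : ((k + 1 : ℕ) : ℚ_[3]) ≠ 0 := Nat.cast_ne_zero.2 (by omega)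
    have c : ((m + 1).choose (k + 1) : ℚ_[3]) =
        (m + 1 : ℕ) * m.choose k * ((k + 1 : ℕ) : ℚ_[3])⁻¹ := by
      rw [eq_mul_inv_iff_mul_eq₀ hk]
      exact_mod_cast (Nat.add_one_mul_choose_eq m k).symm
    rw [e, sub_eq_add_neg]
    refine (Padic.nonarchimedean _ _).trans (max_le ?_ (by rwa [norm_neg]))
    rw [c, norm_mul, norm_mul, norm_inv]
    have h1 : ‖(m.choose k : ℚ_[3])‖ ≤ 1 := by
      simpa using Padic.norm_int_le_one (p := 3) (m.choose k)
    have h2 := h (k + 1) (by omega) le_rfl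
    calc _ ≤ ‖((m + 1 : ℕ) : ℚ_[3])‖ * 1 * B := by gcongr
      _ = _ := by ring

lemma norm_inv_le (j e : ℕ) (hj : 0 < j) (h : ¬ 3 ^ (e + 1) ∣ j) :
    ‖(j : ℚ_[3])‖⁻¹ ≤ 3 ^ e := by
  have hj' : (j : ℚ_[3]) ≠ 0 := Nat.cast_ne_zero.2 hj.ne'
  rw [Padic.norm_eq_zpow_neg_valuation hj', Padic.valuation_natCast, zpow_neg, inv_inv,
    zpow_natCast]
  have : padicValNat 3 j ≤ e := by
    by_contra hc
    exact h ((padicValNat_dvd_iff_le hj.ne').2 (by omega))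
  push_cast
  gcongr
  norm_num

lemma norm_sum_bound (s : Finset ℕ) (f : ℕ → ℚ_[3]) (B : ℝ) (hB : 0 ≤ B)
    (h : ∀ k ∈ s, ‖f k‖ ≤ B) : ‖∑ k ∈ s, f k‖ ≤ B := by
  induction s using Finset.induction_on with
  | empty => simpa
  | insert a s ha ih =>
    rw [sum_insert ha]
    exact (Padic.nonarchimedean _ _).trans (max_le (h a (mem_insert_self _ _))
      (ih fun k hk => h k (mem_insert_of_mem hk)))

lemma norm_coef (k : ℕ) : ‖(3 : ℚ_[3]) ^ k / (2 * (k : ℚ_[3]) + 1)‖ =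
    (3 ^ k)⁻¹ * ‖((2 * k + 1 : ℕ) : ℚ_[3])‖⁻¹ := by
  have h3 : ‖(3 : ℚ_[3])‖ = 3⁻¹ := by simpa using Padic.norm_p (p := 3)
  rw [norm_div, norm_pow, h3, div_eq_mul_inv, inv_pow]
  push_cast
  rfl

lemma term_bound (m k : ℕ) (B C X : ℝ) (hB : 0 ≤ B)
    (h : ∀ j : ℕ, 0 < j → j ≤ k → ‖(j : ℚ_[3])‖⁻¹ ≤ B) (i : ℕ)
    (hC : ‖((2 * i + 1 : ℕ) : ℚ_[3])‖⁻¹ ≤ C) (hX : B * C ≤ X * 3 ^ i) :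
    ‖(3 : ℚ_[3]) ^ i / (2 * (i : ℚ_[3]) + 1) * ((m.choose k : ℚ_[3]) - (-1) ^ k)‖ ≤
      X * ‖((m + 1 : ℕ) : ℚ_[3])‖ := by
  rw [norm_mul, norm_coef]
  have hp : (0 : ℝ) < 3 ^ i := by positivity
  have hC0 : 0 ≤ C := le_trans (by positivity) hC
  calc _ ≤ (3 ^ i)⁻¹ * C * (B * ‖((m + 1 : ℕ) : ℚ_[3])‖) := by
        gcongr
        exact D_bound m k B hB h
    _ = (3 ^ i)⁻¹ * (B * C) * ‖((m + 1 : ℕ) : ℚ_[3])‖ := by ring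
    _ ≤ (3 ^ i)⁻¹ * (X * 3 ^ i) * ‖((m + 1 : ℕ) : ℚ_[3])‖ := by gcongr
    _ = _ := by field_simp

lemma gen_bound (k : ℕ) : ∀ j : ℕ, 0 < j → j ≤ k → ‖(j : ℚ_[3])‖⁻¹ ≤ (k : ℝ) :=
  fun j h1 h2 => (norm_nat_ge j h1).trans (by exact_mod_cast h2)

lemma small_bound (k e : ℕ) (h : k < 3 ^ (e + 1)) :
    ∀ j : ℕ, 0 < j → j ≤ k → ‖(j : ℚ_[3])‖⁻¹ ≤ (3 : ℝ) ^ e :=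
  fun j h1 h2 => norm_inv_le j e h1 fun hd => by
    have := Nat.le_of_dvd h1 hd
    omega

lemma pow_bound1 (k : ℕ) (hk : 5 ≤ k) : 3 * (k * (2 * k + 1)) ≤ 3 ^ k := by
  induction k, hk using Nat.le_induction with
  | base => norm_num
  | succ k hk ih => rw [pow_succ]; nlinarith

lemma pow_bound2 (k : ℕ) (hk : 4 ≤ k) : (2 * k) * (2 * k + 1) ≤ 3 ^ k := by
  induction k, hk using Nat.le_induction with
  | base => norm_num
  | succ k hk ih => rw [pow_succ]; nlinarith

lemma first_bound (m k : ℕ) (hk : 2 ≤ k) :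
    ‖(3 : ℚ_[3]) ^ k / (2 * (k : ℚ_[3]) + 1) * ((m.choose k : ℚ_[3]) - (-1) ^ k)‖ ≤
      1 / 3 * ‖((m + 1 : ℕ) : ℚ_[3])‖ := by
  rcases le_or_gt 5 k with h | h
  · refine term_bound m k k ((2 * k + 1 : ℕ) : ℝ) _ (by positivity) (gen_bound k) k
      (norm_nat_ge _ (by omega)) ?_
    have : ((3 * (k * (2 * k + 1)) : ℕ) : ℝ) ≤ ((3 ^ k : ℕ) : ℝ) := by
      exact_mod_cast pow_bound1 k h
    push_cast at this ⊢
    linarith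
  · interval_cases k
    · exact term_bound m 2 _ _ _ (by positivity) (small_bound 2 0 (by norm_num)) 2
        (norm_inv_le _ 0 (by norm_num) (by norm_num)) (by norm_num)
    · exact term_bound m 3 _ _ _ (by positivity) (small_bound 3 1 (by norm_num)) 3
        (norm_inv_le _ 0 (by norm_num) (by norm_num)) (by norm_num)
    · exact term_bound m 4 _ _ _ (by positivity) (small_bound 4 1 (by norm_num)) 4
        (norm_inv_le _ 2 (by norm_num) (by norm_num)) (by norm_num)

lemma second_bound (m k : ℕ) :
    ‖(3 : ℚ_[3]) ^ k / (2 * (k : ℚ_[3]) + 1) * ((m.choose (2 * k) : ℚ_[3]) - (-1) ^ (2 * k))‖ ≤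
      1 * ‖((m + 1 : ℕ) : ℚ_[3])‖ := by
  rcases le_or_gt 4 k with h | h
  · refine term_bound m (2 * k) ((2 * k : ℕ) : ℝ) ((2 * k + 1 : ℕ) : ℝ) _ (by positivity)
      (gen_bound (2 * k)) k (norm_nat_ge _ (by omega)) ?_
    have := pow_bound2 k h
    rw [one_mul]
    exact_mod_cast this
  · interval_cases k
    · exact term_bound m 0 _ _ _ (by positivity) (small_bound 0 0 (by norm_num)) 0
        (norm_inv_le _ 0 (by norm_num) (by norm_num)) (by norm_num)
    · exact term_bound m 2 _ _ _ (by positivity) (small_bound 2 0 (by norm_num)) 1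
        (norm_inv_le _ 1 (by norm_num) (by norm_num)) (by norm_num)
    · exact term_bound m 4 _ _ _ (by positivity) (small_bound 4 1 (by norm_num)) 2
        (norm_inv_le _ 0 (by norm_num) (by norm_num)) (by norm_num)
    · exact term_bound m 6 _ _ _ (by positivity) (small_bound 6 1 (by norm_num)) 3
        (norm_inv_le _ 0 (by norm_num) (by norm_num)) (by norm_num)

lemma zero_sum (m : ℕ) :
    ∑ k ∈ range (3 * m + 3), 3 ^ k / (2 * (k : ℚ_[3]) + 1) *
      ((-1) ^ k * ((3 * m + 2).choose (2 * k) : ℚ_[3])) = 0 := by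
  have h := congrArg (Int.cast : ℤ → ℚ_[3]) (aux_zero (3 * m + 2) (m + 1) (by omega))
  push_cast at h
  have hN : ((3 * m + 2 + 1 : ℕ) : ℚ_[3]) ≠ 0 := Nat.cast_ne_zero.2 (by omega)
  refine (mul_eq_zero.1 ((?_ : _ = _).trans h)).resolve_left hN
  rw [mul_sum]
  refine sum_congr rfl fun k _ => ?_
  have h0 := odd_ne k
  have c := congrArg (Nat.cast : ℕ → ℚ_[3]) (Nat.add_one_mul_choose_eq (3 * m + 2) (2 * k))
  rw [show 3 * (m + 1) = 3 * m + 2 + 1 by ring, show (-3 : ℚ_[3]) = (-1) * 3 by norm_num, mul_pow]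
  push_cast at c ⊢
  field_simp
  linear_combination c

lemma norm_h (m : ℕ) :
    ‖∑ k ∈ range (3 * m + 3), 3 ^ k / (2 * (k : ℚ_[3]) + 1) * (m.choose k : ℚ_[3])‖ =
      ‖((m + 1 : ℕ) : ℚ_[3])‖ := by
  have hn : ((m + 1 : ℕ) : ℚ_[3]) ≠ 0 := Nat.cast_ne_zero.2 (by omega)
  have hpos : 0 < ‖((m + 1 : ℕ) : ℚ_[3])‖ := norm_pos_iff.2 hn
  apply Padic.norm_eq_of_norm_sub_lt_right
  have e : ∑ k ∈ range (3 * m + 3), 3 ^ k / (2 * (k : ℚ_[3]) + 1) * (m.choose k : ℚ_[3])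
      - ((m + 1 : ℕ) : ℚ_[3]) =
      ∑ k ∈ range (3 * m + 3), ((3 ^ k / (2 * (k : ℚ_[3]) + 1) *
        ((m.choose k : ℚ_[3]) - (-1) ^ k) - if k = 1 then ((m + 1 : ℕ) : ℚ_[3]) else 0) +
        (-1) * ((-1) ^ k * (3 ^ k / (2 * (k : ℚ_[3]) + 1) *
        (((3 * m + 2).choose (2 * k) : ℚ_[3]) - (-1) ^ (2 * k))))) := by
    refine Eq.trans (sub_zero _).symm ?_
    conv_lhs => rw [← zero_sum m]
    have : ((m + 1 : ℕ) : ℚ_[3]) =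
        ∑ k ∈ range (3 * m + 3), if k = 1 then ((m + 1 : ℕ) : ℚ_[3]) else 0 := by
      rw [sum_ite_eq', if_pos (by simp)]
    conv_lhs => rw [this]
    rw [← sum_sub_distrib, ← sum_sub_distrib]
    refine sum_congr rfl fun k _ => ?_
    rw [pow_mul (-1 : ℚ_[3]) 2 k]
    norm_num
    ring
  rw [e]
  refine lt_of_le_of_lt (norm_sum_bound _ _ (1 / 3 * ‖((m + 1 : ℕ) : ℚ_[3])‖) (by positivity)
    fun k _ => (Padic.nonarchimedean _ _).trans (max_le ?_ ?_)) (by linarith)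
  · rcases Nat.lt_or_ge k 2 with hk | hk
    · interval_cases k
      · simp
      · have : (3 : ℚ_[3]) ^ 1 / (2 * ((1 : ℕ) : ℚ_[3]) + 1) = 1 := by norm_num
        rw [this]
        simp
    · rw [if_neg (by omega), sub_zero]
      exact first_bound m k hk
  · rw [norm_mul, norm_mul]
    have := second_bound (3 * m + 2) k
    have h3 : ‖(3 : ℚ_[3])‖ = 3⁻¹ := by simpa using Padic.norm_p (p := 3)
    have hc : ‖((3 * m + 2 + 1 : ℕ) : ℚ_[3])‖ = 3⁻¹ * ‖((m + 1 : ℕ) : ℚ_[3])‖ := by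
      rw [show 3 * m + 2 + 1 = 3 * (m + 1) by ring, Nat.cast_mul, norm_mul, Nat.cast_ofNat, h3]
    rw [hc] at this
    simp only [norm_neg, norm_one, norm_pow, one_pow, one_mul]
    refine this.trans (le_of_eq ?_)
    ring

theorem stmt_0 (n : ℕ) (hn : 0 < n) :
    padicValNat 3 (∑ k ∈ Finset.range n, Nat.choose (2 * k) k) =
      2 * padicValNat 3 n + padicValNat 3 (Nat.choose (2 * n) n) := by
  obtain ⟨m, rfl⟩ : ∃ m, n = m + 1 := ⟨n - 1, by omega⟩
  have hS : ((∑ k ∈ range (m + 1), (2 * k).choose k : ℕ) : ℚ_[3]) ≠ 0 := by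
    rw [Nat.cast_ne_zero, sum_range_succ']
    simp
  have hC : (((2 * (m + 1)).choose (m + 1) : ℕ) : ℚ_[3]) ≠ 0 :=
    Nat.cast_ne_zero.2 (Nat.choose_pos (by omega)).ne'
  have hN : ((m + 1 : ℕ) : ℚ_[3]) ≠ 0 := Nat.cast_ne_zero.2 (by omega)
  have hid := congrArg norm (main_id m (3 * m + 3) (by omega))
  have h2 : ‖(2 : ℚ_[3])‖ = 1 := by
    have := (Padic.norm_natCast_eq_one_iff (p := 3) (n := 2)).2 (by norm_num)
    simpa using this
  have h4 : ‖(4 : ℚ_[3])‖ = 1 := by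
    rw [show (4 : ℚ_[3]) = 2 * 2 by norm_num, norm_mul, h2, one_mul]
  rw [norm_mul, norm_mul, norm_mul, norm_mul, norm_h, norm_pow, h2, h4, one_pow, mul_one, mul_one,
    show (m : ℚ_[3]) + 1 = ((m + 1 : ℕ) : ℚ_[3]) by push_cast; rfl,
    Padic.norm_eq_zpow_neg_valuation hS, Padic.norm_eq_zpow_neg_valuation hC,
    Padic.norm_eq_zpow_neg_valuation hN, Padic.valuation_natCast, Padic.valuation_natCast,
    Padic.valuation_natCast, ← zpow_add₀ (by norm_num), ← zpow_add₀ (by norm_num)] at hid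
  have := zpow_right_injective₀ (by norm_num) (by norm_num) hid
  omega
end

section
/- Let m ≡ 1 (mod 3) be an integer. Then for every positive integer n, the 3-adic valuation of (1/n)·∑_{k=0}^{n-1} C(2k,k)/m^k is at least min{ν₃(n), ν₃(m−1) − 1}. -/
open Finset

namespace SunAux

/-- the auxiliary sum `∑ C(N,i) z^i/(2i+1)` -/
noncomputable def Gam (N : ℕ) (z : ℚ_[3]) : ℚ_[3] :=
  ∑ i ∈ range (N + 1), (N.choose i : ℚ_[3]) * (z ^ i / (2 * i + 1))

lemma odd_ne (i : ℕ) : (2 * (i : ℚ_[3]) + 1) ≠ 0 := by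
  have : ((2 * i + 1 : ℕ) : ℚ_[3]) ≠ 0 := Nat.cast_ne_zero.mpr (by omega)
  push_cast at this
  exact this

lemma Gam_succ (N : ℕ) (z : ℚ_[3]) :
    (2 * N + 3) * Gam (N + 1) z = 2 * (N + 1) * Gam N z + (1 + z) ^ (N + 1) := by
  have h1 : Gam N z = ∑ i ∈ range (N + 1 + 1), (N.choose i : ℚ_[3]) * (z ^ i / (2 * i + 1)) := by
    rw [Gam, Finset.sum_range_succ _ (N + 1)]
    simp
  rw [h1, Gam, add_comm (1 : ℚ_[3]) z, add_pow, mul_sum, mul_sum, ← sum_add_distrib]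
  refine sum_congr rfl fun i hi => ?_
  have hi' : i ≤ N + 1 := by simpa [Nat.lt_succ_iff] using hi
  have h2 : ((N : ℚ_[3]) + 1) * (N.choose i) = ((N + 1).choose i) * (N + 1 - i) := by
    have := congrArg (Nat.cast (R := ℚ_[3])) (Nat.choose_mul_succ_eq N i)
    push_cast [Nat.cast_sub hi'] at this
    linear_combination this
  have := odd_ne i
  field_simp
  simp only [one_pow, mul_one]
  linear_combination (-2 * z ^ i) * h2

lemma main_id (N : ℕ) (x : ℚ_[3]) :
    2 * 4 ^ N * ∑ k ∈ range (N + 1), (Nat.choose (2 * k) k : ℚ_[3]) * x ^ k =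
      (N + 1) * (Nat.choose (2 * (N + 1)) (N + 1)) * Gam N (4 * x - 1) := by
  induction N with
  | zero => simp [Gam]
  | succ N ih =>
    rw [sum_range_succ]
    have h := Gam_succ N (4 * x - 1)
    have hc : ((N : ℚ_[3]) + 2) * (Nat.choose (2 * (N + 1 + 1)) (N + 1 + 1)) =
        2 * (2 * N + 3) * (Nat.choose (2 * (N + 1)) (N + 1)) := by
      have := Nat.succ_mul_centralBinom_succ (N + 1)
      simp only [Nat.centralBinom] at this
      have h3 := congrArg (Nat.cast (R := ℚ_[3])) this
      push_cast at h3
      linear_combination h3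
    have h4 : (1 + (4 * x - 1)) ^ (N + 1) = (4:ℚ_[3]) ^ (N + 1) * x ^ (N + 1) := by
      rw [← mul_pow]; ring
    rw [h4] at h
    push_cast
    rw [show (N : ℚ_[3]) + 1 + 1 = N + 2 by ring, hc]
    set c : ℚ_[3] := (Nat.choose (2 * (N + 1)) (N + 1) : ℚ_[3])
    rw [pow_succ] at *
    linear_combination 4 * ih - 2 * c * h

lemma err_dvd (a N : ℕ) (h : 3 ^ a ∣ N + 1) (j : ℕ) (i : ℕ) (hi : i < 3 ^ (j + 1)) :
    (3 : ℤ) ^ a ∣ 3 ^ j * ((N.choose i : ℤ) - (-1) ^ i) := by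
  induction i with
  | zero => simp
  | succ i ih =>
    have ih := ih (by omega)
    have h1 : 3 ^ a ∣ 3 ^ j * (N + 1).choose (i + 1) := by
      have h2 : 3 ^ a ∣ (N + 1).choose (i + 1) * (i + 1) := by
        rw [← Nat.add_one_mul_choose_eq]
        exact Dvd.dvd.mul_right h _
      obtain ⟨v, w, hw, hvw⟩ := Nat.exists_eq_pow_mul_and_not_dvd (n := i + 1) (by omega) 3 (by norm_num)
      have hv : v ≤ j := by
        have : 3 ^ v ≤ i + 1 := by
          rw [hvw]; apply Nat.le_mul_of_pos_right
          rcases Nat.eq_zero_or_pos w with rfl | h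
          · simp at hw
          · exact h
        have := (Nat.pow_lt_pow_iff_right (a := 3) (by norm_num)).mp (this.trans_lt hi)
        omega
      have hcop : Nat.Coprime (3 ^ a) w :=
        Nat.Coprime.pow_left _ ((Nat.Prime.coprime_iff_not_dvd Nat.prime_three).mpr hw)
      rw [hvw, ← mul_assoc] at h2
      have h3 := hcop.dvd_of_dvd_mul_right h2
      rw [← hvw, mul_comm] at h3
      exact h3.trans (Nat.mul_dvd_mul_right (pow_dvd_pow 3 hv) _)
    have h2 : (3 : ℤ) ^ a ∣ 3 ^ j * ((N + 1).choose (i + 1) : ℤ) := by exact_mod_cast h1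
    have h3 := dvd_sub h2 ih
    rw [Nat.choose_succ_succ] at h3
    have h4 : (3 : ℤ) ^ j * ((N.choose (i + 1) : ℤ) - (-1) ^ (i + 1)) =
        3 ^ j * ((N.choose i + N.choose (i + 1) : ℕ) : ℤ) - 3 ^ j * ((N.choose i : ℤ) - (-1) ^ i) := by
      push_cast
      ring
    rw [h4]
    exact h3

lemma pow_bound (q : ℕ) (hq : 1 ≤ q) : 4 * q + 3 < 3 ^ (q + 1) := by
  induction q, hq using Nat.le_induction with
  | base => norm_num
  | succ q hq ih => rw [pow_succ]; omega

lemma norm_inv_odd (i j : ℕ) (h : 2 * i + 1 < 3 ^ (j + 1)) :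
    ‖(3 : ℚ_[3]) ^ j / (2 * i + 1)‖ ≤ 1 := by
  obtain ⟨v, w, hw, hvw⟩ := Nat.exists_eq_pow_mul_and_not_dvd (n := 2 * i + 1) (by omega) 3 (by norm_num)
  have hv : v ≤ j := by
    have : 3 ^ v ≤ 2 * i + 1 := by
      rw [hvw]; apply Nat.le_mul_of_pos_right
      rcases Nat.eq_zero_or_pos w with rfl | h
      · simp at hw
      · exact h
    have := (Nat.pow_lt_pow_iff_right (a := 3) (by norm_num)).mp (this.trans_lt h)
    omega
  have hw1 : ‖(w : ℚ_[3])‖ = 1 := by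
    rw [Padic.norm_natCast_eq_one_iff]
    exact (Nat.Prime.coprime_iff_not_dvd Nat.prime_three).mpr hw
  have h1 : (2 * (i : ℚ_[3]) + 1) = 3 ^ v * w := by exact_mod_cast congrArg (Nat.cast (R := ℚ_[3])) hvw
  obtain ⟨d, rfl⟩ := Nat.exists_eq_add_of_le hv
  have h3 : ‖(3 : ℚ_[3])‖ = 3⁻¹ := by simpa using Padic.norm_p (p := 3)
  rw [h1, norm_div, norm_mul, norm_pow, norm_pow, hw1, h3, mul_one, pow_add,
    mul_div_cancel_left₀ _ (by positivity)]
  exact pow_le_one₀ (by norm_num) (by norm_num)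

lemma norm_three_pow (e : ℕ) : ‖(3 : ℚ_[3]) ^ e‖ = (3 : ℝ) ^ (-(e : ℤ)) := by
  simpa using Padic.norm_p_pow (p := 3) e

/-- a general coefficient estimate -/
lemma coef_bound (a : ℕ) (i : ℕ) (E : ℤ) (j k : ℕ) (hj : 2 * i + 1 < 3 ^ (j + 1))
    (hE : (3 : ℤ) ^ a ∣ 3 ^ k * E) (hjk : j + k ≤ i) :
    ‖(E : ℚ_[3]) * (3 ^ i / (2 * i + 1))‖ ≤ (3 : ℝ) ^ (-(a : ℤ)) := by
  obtain ⟨d, rfl⟩ := Nat.exists_eq_add_of_le hjk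
  obtain ⟨F, hF⟩ := hE
  have hF' : (3 : ℚ_[3]) ^ k * E = 3 ^ a * F := by exact_mod_cast congrArg (Int.cast (R := ℚ_[3])) hF
  have : (E : ℚ_[3]) * (3 ^ (j + k + d) / (2 * ((j + k + d : ℕ) : ℚ_[3]) + 1)) =
      3 ^ a * (((F * 3 ^ d : ℤ) : ℚ_[3]) * (3 ^ j / (2 * ((j + k + d : ℕ) : ℚ_[3]) + 1))) := by
    rw [pow_add, pow_add]
    push_cast
    linear_combination (3 ^ j * 3 ^ d / (2 * ((j : ℚ_[3]) + k + d) + 1)) * hF'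
  rw [this, norm_mul, norm_three_pow]
  refine mul_le_of_le_one_right (by positivity) ?_
  rw [norm_mul]
  exact mul_le_one₀ (Padic.norm_int_le_one _) (norm_nonneg _) (norm_inv_odd _ _ hj)

lemma term_bound (a N : ℕ) (h : 3 ^ a ∣ N + 1) (i : ℕ) :
    ‖(((N.choose i : ℤ) - (-1) ^ i * N.choose (2 * i) : ℤ) : ℚ_[3]) * (3 ^ i / (2 * i + 1))‖
      ≤ (3 : ℝ) ^ (-(a : ℤ)) := by
  have key : ∀ k, 2 * i < 3 ^ (k + 1) →
      (3 : ℤ) ^ a ∣ 3 ^ k * ((N.choose i : ℤ) - (-1) ^ i * N.choose (2 * i)) := by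
    intro k hk
    have h1 := err_dvd a N h k i (by omega)
    have h2 := err_dvd a N h k (2 * i) hk
    rw [pow_mul, neg_one_sq, one_pow] at h2
    have := dvd_sub h1 (Dvd.dvd.mul_left h2 ((-1) ^ i))
    have h4 : (3 : ℤ) ^ k * ((N.choose i : ℤ) - (-1) ^ i * N.choose (2 * i)) =
        3 ^ k * ((N.choose i : ℤ) - (-1) ^ i) - (-1) ^ i * (3 ^ k * ((N.choose (2 * i) : ℤ) - 1)) := by
      ring
    rw [h4]
    exact this
  rcases Nat.lt_or_ge i 2 with hi | hi
  · interval_cases i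
    · exact coef_bound a 0 _ 0 0 (by norm_num) (key 0 (by norm_num)) (by norm_num)
    · exact coef_bound a 1 _ 1 0 (by norm_num) (key 0 (by norm_num)) (by norm_num)
  · have := pow_bound (i / 2) (by omega)
    exact coef_bound a i _ (i / 2) (i / 2) (by omega) (key _ (by omega)) (by omega)

lemma g_bound (i : ℕ) : ‖(3 : ℚ_[3]) ^ i / (2 * i + 1)‖ ≤ 1 := by
  have h : ∃ j, 2 * i + 1 < 3 ^ (j + 1) ∧ j ≤ i := by
    refine ⟨i, ?_, le_rfl⟩
    induction i with
    | zero => norm_num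
    | succ i ih => rw [pow_succ]; omega
  obtain ⟨j, hj, hji⟩ := h
  simpa using coef_bound 0 i 1 j 0 hj (by simp) (by omega)

def V (M n : ℕ) : ℤ := ∑ i ∈ range M, (n.choose (2 * i + 1) : ℤ) * (-3) ^ i
def U (M n : ℕ) : ℤ := ∑ i ∈ range M, (n.choose (2 * i) : ℤ) * (-3) ^ i

lemma V_succ (M n : ℕ) : V M (n + 1) = U M n + V M n := by
  simp only [V, U, ← sum_add_distrib]
  refine sum_congr rfl fun i _ => ?_
  rw [Nat.choose_succ_succ]; push_cast; ring

lemma U_succ (M n : ℕ) (h : n < 2 * M + 1) : U (M + 1) (n + 1) = U (M + 1) n - 3 * V (M + 1) n := by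
  have hV : V (M + 1) n = V M n := by
    rw [V, sum_range_succ, Nat.choose_eq_zero_of_lt h, V]; simp
  rw [hV, U, U, V, sum_range_succ', sum_range_succ' _ M, mul_sum]
  have : ∀ i, ((n + 1).choose (2 * (i + 1)) : ℤ) * (-3) ^ (i + 1) =
      (n.choose (2 * (i + 1)) : ℤ) * (-3) ^ (i + 1) - 3 * ((n.choose (2 * i + 1) : ℤ) * (-3) ^ i) := by
    intro i
    rw [show 2 * (i + 1) = 2 * i + 1 + 1 by ring, Nat.choose_succ_succ]; push_cast; ring
  simp only [this, sum_sub_distrib]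
  simp
  ring

lemma V_zero (M k : ℕ) (h : 3 * k < 2 * M + 1 + 1) : V (M + 1) (3 * k) = 0 := by
  induction k with
  | zero => simp [V]
  | succ k ih =>
    have ih := ih (by omega)
    rw [show 3 * (k + 1) = 3 * k + 1 + 1 + 1 by ring, V_succ, V_succ, V_succ,
      U_succ _ _ (by omega), V_succ, U_succ _ _ (by omega), ih]
    ring

lemma Z_zero (N : ℕ) (h : 3 ∣ N + 1) :
    ∑ i ∈ range (N + 1), (N.choose (2 * i) : ℚ_[3]) * ((-1) ^ i * (3 ^ i / (2 * i + 1))) = 0 := by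
  obtain ⟨k, hk⟩ := h
  have hN : ((N : ℚ_[3]) + 1) ≠ 0 := by exact_mod_cast Nat.succ_ne_zero N
  have h0 := V_zero N k (by omega)
  rw [← hk, V] at h0
  have h1 := congrArg (Int.cast (R := ℚ_[3])) h0
  push_cast at h1
  refine (mul_eq_zero.mp (?_ : ((N : ℚ_[3]) + 1) * _ = 0)).resolve_left hN
  rw [← h1, mul_sum]
  refine sum_congr rfl fun i _ => ?_
  have h2 := congrArg (Nat.cast (R := ℚ_[3])) (Nat.add_one_mul_choose_eq N (2 * i))
  push_cast at h2
  have := odd_ne i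
  rw [neg_pow (3 : ℚ_[3])]
  field_simp
  linear_combination h2

lemma norm_sum_le (s : Finset ℕ) (f : ℕ → ℚ_[3]) (C : ℝ) (hC : 0 ≤ C) (h : ∀ i ∈ s, ‖f i‖ ≤ C) :
    ‖∑ i ∈ s, f i‖ ≤ C :=
  IsUltrametricDist.norm_sum_le_of_forall_le_of_nonneg hC h

lemma Gam_three (a N : ℕ) (h : 3 ^ a ∣ N + 1) : ‖Gam N 3‖ ≤ (3 : ℝ) ^ (-(a : ℤ)) := by
  rcases Nat.eq_zero_or_pos a with rfl | ha
  · refine norm_sum_le _ _ _ (by positivity) fun i _ => ?_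
    rw [norm_mul]
    simpa using mul_le_one₀ (Padic.norm_int_le_one (N.choose i : ℤ)) (norm_nonneg _) (g_bound i)
  · have h3 : 3 ∣ N + 1 := (dvd_pow_self 3 ha.ne').trans h
    have : Gam N 3 = ∑ i ∈ range (N + 1),
        (((N.choose i : ℤ) - (-1) ^ i * N.choose (2 * i) : ℤ) : ℚ_[3]) * (3 ^ i / (2 * i + 1)) := by
      rw [← sub_zero (Gam N 3), ← Z_zero N h3, Gam, ← sum_sub_distrib]
      refine sum_congr rfl fun i _ => ?_
      push_cast; ring
    rw [this]
    exact norm_sum_le _ _ _ (by positivity) fun i _ => term_bound a N h i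

lemma Gam_bound (e N : ℕ) (h : 3 ^ e ∣ N + 1) (y : ℚ_[3]) (hy : ‖y - 1‖ ≤ (3 : ℝ) ^ (-(e : ℤ))) :
    ‖Gam N (3 * y)‖ ≤ (3 : ℝ) ^ (-(e : ℤ)) := by
  have he1 : (3 : ℝ) ^ (-(e : ℤ)) ≤ 1 := zpow_le_one_of_nonpos₀ (by norm_num) (by simp)
  have hy1 : ‖y‖ ≤ 1 := by
    have := IsUltrametricDist.norm_add_le_max (y - 1) 1
    rw [sub_add_cancel] at this
    exact this.trans (max_le (hy.trans he1) (by simp))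
  have : Gam N (3 * y) = Gam N 3 + ∑ i ∈ range (N + 1),
      (N.choose i : ℚ_[3]) * ((3 ^ i / (2 * i + 1)) * (y ^ i - 1)) := by
    rw [Gam, Gam, ← sum_add_distrib]
    refine sum_congr rfl fun i _ => ?_
    rw [mul_pow]; ring
  rw [this]
  refine (IsUltrametricDist.norm_add_le_max _ _).trans (max_le (Gam_three e N h) ?_)
  refine norm_sum_le _ _ _ (by positivity) fun i _ => ?_
  have h1 : ‖y ^ i - 1‖ ≤ (3 : ℝ) ^ (-(e : ℤ)) := by
    rw [← mul_geom_sum, norm_mul]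
    refine (mul_le_of_le_one_right (norm_nonneg _) ?_).trans hy
    refine norm_sum_le _ _ _ (by positivity) fun i _ => ?_
    rw [norm_pow]
    exact pow_le_one₀ (norm_nonneg _) hy1
  rw [norm_mul, norm_mul]
  have h2 : ‖(N.choose i : ℚ_[3])‖ ≤ 1 := by simpa using Padic.norm_int_le_one (p := 3) (N.choose i : ℤ)
  calc _ ≤ 1 * (1 * (3 : ℝ) ^ (-(e : ℤ))) := by
        gcongr
        exact g_bound i
    _ = _ := by ring

end SunAux

/-- Sun's conjecture (i), first part: for `m ≡ 1 (mod 3)` and `n ≥ 1`,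
`ν₃((1/n)·∑_{k<n} C(2k,k)/m^k) ≥ min{ν₃(n), ν₃(m−1) − 1}` (with `ν₃(0) = ∞`),
expressed via the 3-adic norm in `ℚ_[3]`. -/
theorem stmt_3 (m : ℤ) (hm : m ≡ 1 [ZMOD 3]) (n : ℕ) (hn : 0 < n) (e : ℕ)
    (he : (e : ℕ∞) ≤ min (padicValNat 3 n : ℕ∞) (emultiplicity (3 : ℤ) (m - 1) - 1)) :
    ‖((n : ℚ_[3]))⁻¹ * ∑ k ∈ Finset.range n,
        (Nat.choose (2 * k) k : ℚ_[3]) / (m : ℚ_[3]) ^ k‖ ≤ (3 : ℝ) ^ (-(e : ℤ)) := by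
  obtain ⟨he1, he2⟩ := le_min_iff.mp he
  have hd3 : (3 : ℤ) ∣ m - 1 := (Int.modEq_iff_dvd.mp hm.symm)
  have hme : (3 : ℤ) ^ (e + 1) ∣ m - 1 := by
    rw [pow_dvd_iff_le_emultiplicity]
    have h1 : (1 : ℕ∞) ≤ emultiplicity (3 : ℤ) (m - 1) := by
      have := pow_dvd_iff_le_emultiplicity (a := (3 : ℤ)) (b := m - 1) (k := 1)
      simpa using this.mp (by simpa using hd3)
    push_cast
    calc (e : ℕ∞) + 1 ≤ (emultiplicity (3 : ℤ) (m - 1) - 1) + 1 := by gcongr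
      _ = _ := tsub_add_cancel_of_le h1
  have hne : 3 ^ e ∣ n := (pow_dvd_pow 3 (by exact_mod_cast he1)).trans pow_padicValNat_dvd
  obtain ⟨N, rfl⟩ : ∃ N, n = N + 1 := ⟨n - 1, by omega⟩
  have hm1 : ‖(m : ℚ_[3])‖ = 1 := by
    rw [Padic.norm_intCast_eq_one_iff]
    have h3 : ¬ (3 : ℤ) ∣ m := by omega
    exact ((Int.prime_three.coprime_iff_not_dvd).mpr h3).symm
  have hm0 : (m : ℚ_[3]) ≠ 0 := by
    intro h; rw [h] at hm1; simp at hm1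
  obtain ⟨c, hc⟩ := hme
  have hc' : (m : ℚ_[3]) - 1 = 3 ^ (e + 1) * c := by exact_mod_cast congrArg (Int.cast (R := ℚ_[3])) hc
  have hG := SunAux.Gam_bound e N hne (1 - 3 ^ e * (((4 * c : ℤ) : ℚ_[3]) / m)) (by
    rw [sub_sub_cancel_left, norm_neg, norm_mul, SunAux.norm_three_pow]
    refine mul_le_of_le_one_right (by positivity) ?_
    rw [norm_div, hm1, div_one]
    exact Padic.norm_int_le_one _)
  have hz : 3 * (1 - 3 ^ e * (((4 * c : ℤ) : ℚ_[3]) / m)) = 4 * (m : ℚ_[3])⁻¹ - 1 := by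
    push_cast
    field_simp
    rw [pow_succ] at hc'
    linear_combination 4 * hc'
  rw [hz] at hG
  have hid := SunAux.main_id N (m : ℚ_[3])⁻¹
  have hS : ∑ k ∈ Finset.range (N + 1), (Nat.choose (2 * k) k : ℚ_[3]) / (m : ℚ_[3]) ^ k =
      ∑ k ∈ Finset.range (N + 1), (Nat.choose (2 * k) k : ℚ_[3]) * ((m : ℚ_[3])⁻¹) ^ k := by
    simp only [inv_pow, div_eq_mul_inv]
  have hN : ((N : ℚ_[3]) + 1) ≠ 0 := by exact_mod_cast Nat.succ_ne_zero N
  have hu : ‖(2 * 4 ^ N : ℚ_[3])‖ = 1 := by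
    have : ‖((2 * 4 ^ N : ℕ) : ℚ_[3])‖ = 1 := by
      rw [Padic.norm_natCast_eq_one_iff]
      exact Nat.Coprime.mul_right (by norm_num) (Nat.Coprime.pow_right _ (by norm_num))
    exact_mod_cast this
  rw [hS]
  have hfin : (2 * 4 ^ N : ℚ_[3]) * (((N + 1 : ℕ) : ℚ_[3])⁻¹ *
      ∑ k ∈ Finset.range (N + 1), (Nat.choose (2 * k) k : ℚ_[3]) * ((m : ℚ_[3])⁻¹) ^ k) =
      (Nat.choose (2 * (N + 1)) (N + 1)) * SunAux.Gam N (4 * (m : ℚ_[3])⁻¹ - 1) := by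
    rw [mul_left_comm, hid]
    push_cast
    field_simp
  have hfn := congrArg norm hfin
  rw [norm_mul, hu, one_mul] at hfn
  rw [hfn, norm_mul]
  refine (mul_le_of_le_one_left (norm_nonneg _) ?_).trans hG
  simpa using Padic.norm_int_le_one (p := 3) (Nat.choose (2 * (N + 1)) (N + 1) : ℤ)
end

section
/- Let m ≡ 1 (mod 3), m ≠ 1, and let a ≥ ν₃(m−1) be an integer (with a ≥ 1). Then (1/3^a)·∑_{k=0}^{3^a−1} C(2k,k)/m^k ≡ (m−1)/3 (mod 3^{ν₃(m−1)}) as 3-adic integers. -/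
open Finset

theorem log_aux (j : ℕ) (hj : 1 ≤ j) :
    Nat.log 3 (j+1) + Nat.log 3 j + Nat.log 3 (2*j+2) ≤ j := by
  have key : ∀ q, 2 ≤ q → 6*q+6+1 ≤ 3^(q+1) := by
    intro q hq
    induction q, hq using Nat.le_induction with
    | base => norm_num
    | succ k hk ih => rw [pow_succ]; omega
  by_cases h : j < 6
  · have l1 : Nat.log 3 1 = 0 := by norm_num
    have l2 : Nat.log 3 2 = 0 := by norm_num
    have l3 : Nat.log 3 3 = 1 := by norm_num
    interval_cases j <;> simp <;> norm_num
  · have hq : 2 ≤ j / 3 := by omega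
    have := key _ hq
    have h3 : Nat.log 3 (2*j+2) ≤ j / 3 := by
      have : Nat.log 3 (2*j+2) < j/3 + 1 := Nat.log_lt_of_lt_pow (by omega) (by omega)
      omega
    have h1 : Nat.log 3 (j+1) ≤ Nat.log 3 (2*j+2) := Nat.log_mono_right (by omega)
    have h2 : Nat.log 3 j ≤ Nat.log 3 (2*j+2) := Nat.log_mono_right (by omega)
    omega

/-- the expansion of the central binomial sum around `m = 4` -/
theorem F_identity {K : Type*} [Field K] [CharZero K] (e : K) (n : ℕ) :
    ∑ k ∈ range n, (Nat.centralBinom k : K) * (e+4)^(n-1-k) =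
      Nat.centralBinom n * ∑ j ∈ range n, (n.choose (j+1) : K) * e^j / Nat.centralBinom (j+1) := by
  have hc : ∀ k, (Nat.centralBinom k : K) ≠ 0 := fun k => by
    exact_mod_cast Nat.centralBinom_ne_zero k
  induction n with
  | zero => simp
  | succ n ih =>
    have hF : ∑ k ∈ range (n+1), (Nat.centralBinom k : K) * (e+4)^(n+1-1-k) =
        (e+4) * ∑ k ∈ range n, (Nat.centralBinom k : K) * (e+4)^(n-1-k) + Nat.centralBinom n := by
      rw [sum_range_succ, mul_sum]
      congr 1
      · apply sum_congr rfl
        intro k hk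
        have := mem_range.mp hk
        rw [show n+1-1-k = (n-1-k)+1 by omega, pow_succ]; ring
      · simp
    rw [hF, ih]
    have hs : ((n:K)+1) * Nat.centralBinom (n+1) = 2*(2*n+1) * Nat.centralBinom n := by
      exact_mod_cast Nat.succ_mul_centralBinom_succ n
    have hn1 : (n:K)+1 ≠ 0 := by exact_mod_cast Nat.succ_ne_zero n
    have hs' : (Nat.centralBinom (n+1) : K) = 2*(2*n+1) / (n+1) * Nat.centralBinom n := by
      field_simp; linear_combination hs
    -- coefficient recursion
    have hrec : ∀ j, 2*(2*(n:K)+1)/(n+1) * ((n+1).choose (j+2)) / Nat.centralBinom (j+2)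
        = (n.choose (j+1)) / Nat.centralBinom (j+1) + 4 * (n.choose (j+2)) / Nat.centralBinom (j+2) := by
      intro j
      have h1 : ((j:K)+1+1) * Nat.centralBinom (j+2) = 2*(2*(j+1)+1) * Nat.centralBinom (j+1) := by
        exact_mod_cast Nat.succ_mul_centralBinom_succ (j+1)
      have hj2 : (j:K)+1+1 ≠ 0 := by exact_mod_cast Nat.succ_ne_zero (j+1)
      have h1' : (Nat.centralBinom (j+1) : K) = ((j:K)+1+1) * Nat.centralBinom (j+2) / (2*(2*(j+1)+1)) := by
        have : (2*(2*((j:K)+1)+1)) ≠ 0 := by exact_mod_cast (by omega : 2*(2*(j+1)+1) ≠ 0)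
        rw [eq_div_iff this]; linear_combination -h1
      have h2 : ((n:K)+1) * n.choose (j+1) = (n+1).choose (j+2) * (j+1+1) := by
        exact_mod_cast Nat.add_one_mul_choose_eq n (j+1)
      have h3 : ((n+1).choose (j+2) : K) = n.choose (j+1) + n.choose (j+2) := by
        exact_mod_cast Nat.choose_succ_succ n (j+1)
      have hA : ((n.choose (j+1) : ℕ) : K) = (n+1).choose (j+2) * (j+1+1) / (n+1) := by
        field_simp; linear_combination h2
      have hB : ((n.choose (j+2) : ℕ) : K) = (n+1).choose (j+2) - (n+1).choose (j+2) * (j+1+1) / (n+1) := by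
        rw [← hA]; linear_combination -h3
      rw [hB, hA, h1']
      have := hc (j+2)
      have : (2*(2*((j:K)+1)+1)) ≠ 0 := by exact_mod_cast (by omega : 2*(2*(j+1)+1) ≠ 0)
      have : ((2*((j:K)+1)+1)) ≠ 0 := by exact_mod_cast (by omega : (2*(j+1)+1) ≠ 0)
      field_simp
      ring
    have e1 : ∑ j ∈ range (n+1), ((n+1).choose (j+1) : K) * e^j / Nat.centralBinom (j+1) =
      ∑ j ∈ range n, ((n+1).choose (j+2) : K) * e^(j+1) / Nat.centralBinom (j+2) + (n+1)/2 := by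
      rw [sum_range_succ']; simp [Nat.centralBinom]
    have e2 : ∑ j ∈ range n, (n.choose (j+1) : K) * e^j / Nat.centralBinom (j+1) =
      ∑ j ∈ range n, (n.choose (j+2) : K) * e^(j+1) / Nat.centralBinom (j+2) + n/2 := by
      have := sum_range_succ (fun j => (n.choose (j+1) : K) * e^j / Nat.centralBinom (j+1)) n
      rw [sum_range_succ'] at this
      simp [Nat.centralBinom] at this
      simp [Nat.centralBinom]
      exact this.symm
    rw [hs', e1]
    have e3 : ∑ j ∈ range n, 2*(2*(n:K)+1)/(n+1) * (((n+1).choose (j+2) : K) * e^(j+1) / Nat.centralBinom (j+2))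
       = e * ∑ j ∈ range n, (n.choose (j+1) : K) * e^j / Nat.centralBinom (j+1) + 
         4 * ∑ j ∈ range n, (n.choose (j+2) : K) * e^(j+1) / Nat.centralBinom (j+2) := by
      rw [mul_sum, mul_sum, ← sum_add_distrib]
      apply sum_congr rfl
      intro j _
      linear_combination e^(j+1) * hrec j
    have e4 : (2*(2*(n:K)+1)/(n+1)) * ((n+1)/2) = 2*n+1 := by field_simp
    rw [← mul_sum] at e3
    linear_combination (-(Nat.centralBinom n : K)) * e3 - (Nat.centralBinom n : K) * e4
      + 4 * (Nat.centralBinom n : K) * e2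

def UU {K : Type*} [CommRing K] (e : K) (n : ℕ) : K := ∑ j ∈ range n, ((n+j).choose (2*j+1) : K) * e^j
def BB {K : Type*} [CommRing K] (e : K) (n : ℕ) : K := ∑ j ∈ range (n+1), ((n+j).choose (2*j) : K) * e^j

theorem UU_succ {K : Type*} [CommRing K] (e : K) (n : ℕ) : UU e (n+1) = UU e n + BB e n := by
  have : UU e n = ∑ j ∈ range (n+1), ((n+j).choose (2*j+1) : K) * e^j := by
    rw [sum_range_succ, Nat.choose_eq_zero_of_lt (by omega : n+n < 2*n+1)]; simp [UU]
  rw [this, UU, BB, ← sum_add_distrib]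
  apply sum_congr rfl
  intro j _
  rw [show n+1+j = (n+j)+1 by ring, Nat.choose_succ_succ]; push_cast; ring

theorem BB_succ {K : Type*} [CommRing K] (e : K) (n : ℕ) : BB e (n+1) = BB e n + e * UU e (n+1) := by
  have : BB e n = ∑ j ∈ range (n+1+1), ((n+j).choose (2*j) : K) * e^j := by
    rw [sum_range_succ, Nat.choose_eq_zero_of_lt (by omega : n+(n+1) < 2*(n+1))]; simp [BB]
  rw [this, UU, BB, sum_range_succ', sum_range_succ' _ (n+1), mul_sum]
  have : ∀ j ∈ range (n+1), ((n+1+(j+1)).choose (2*(j+1)) : K) * e^(j+1) = ((n+(j+1)).choose (2*(j+1)) : K) * e^(j+1) + e * (((n+1+j).choose (2*j+1) : K) * e^j) := by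
    intro j _
    rw [show n+1+(j+1) = (n+1+j)+1 by ring, show 2*(j+1) = (2*j+1)+1 by ring, Nat.choose_succ_succ,
      show n+(j+1) = n+1+j by ring]
    push_cast; ring
  rw [sum_congr rfl this, sum_add_distrib]; simp; ring

theorem UU_add {K : Type*} [CommRing K] (e : K) (p q : ℕ) :
    UU e (p+q) = UU e p * BB e q + UU e q * BB e p - e * UU e p * UU e q ∧
    BB e (p+q) = BB e p * BB e q + e * UU e p * UU e q := by
  induction q with
  | zero => simp [UU, BB]
  | succ q ih =>
    obtain ⟨h1, h2⟩ := ih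
    have a1 := UU_succ e (p+q)
    have a2 := BB_succ e (p+q)
    have b1 := UU_succ e q
    have b2 := BB_succ e q
    constructor
    · rw [← add_assoc, a1, h1, h2, b2, b1]; ring
    · rw [← add_assoc, a2, a1, h1, h2, b2, b1]; ring

theorem UU_inv {K : Type*} [CommRing K] (e : K) (n : ℕ) :
    BB e n ^ 2 - e * UU e n ^ 2 - e * UU e n * BB e n = 1 := by
  induction n with
  | zero => simp [UU, BB]
  | succ n ih => rw [BB_succ, UU_succ, ← ih]; ring

theorem UU_triple {K : Type*} [CommRing K] (e : K) (n : ℕ) :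
    UU e (3*n) = UU e n * (3 + e * (e+4) * UU e n ^ 2) := by
  have h2 := UU_add e n n
  have h3 := UU_add e (n+n) n
  rw [show 3*n = n+n+n by ring, h3.1, h2.1, h2.2]
  linear_combination (3 * UU e n) * UU_inv e n

theorem choose_rel (n j : ℕ) :
    (n+j).choose (2*j+1) * Nat.centralBinom (j+1) = 2 * (n.choose (j+1) * (n+j).choose j) := by
  have h1 : (n+j).choose (2*j+1) * (2*j+1).choose j = (n+j).choose j * (n+j-j).choose (2*j+1-j) := by
    by_cases h : 2*j+1 ≤ n+j
    · exact Nat.choose_mul (by omega)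
    · rw [Nat.choose_eq_zero_of_lt (by omega : n+j < 2*j+1),
        Nat.choose_eq_zero_of_lt (by omega : n+j-j < 2*j+1-j)]; simp
  have h2 : Nat.centralBinom (j+1) = 2 * (2*j+1).choose j := by
    rw [Nat.centralBinom_eq_two_mul_choose, show 2*(j+1) = (2*j+1)+1 by ring, Nat.choose_succ_succ,
      Nat.choose_symm_half]; ring
  rw [show n+j-j = n by omega, show 2*j+1-j=j+1 by omega] at h1
  rw [h2]; linear_combination 2 * h1

theorem norm_nat_le (k : ℕ) : ‖(k : ℚ_[3])‖ ≤ 1 := by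
  simpa using Padic.norm_int_le_one (p := 3) (k : ℤ)

theorem norm_inv_nat (k l : ℕ) (hk : k ≠ 0) (h : padicValNat 3 k ≤ l) :
    ‖(k : ℚ_[3])‖⁻¹ ≤ (3:ℝ)^l := by
  rw [← Rat.cast_natCast, Padic.eq_padicNorm, padicNorm.eq_zpow_of_nonzero (by exact_mod_cast hk)]
  simp
  exact_mod_cast Nat.pow_le_pow_right (by norm_num) h

theorem choose_div (n i : ℕ) (hn : 0 < n) :
    ((n.choose (i+1) : ℕ) : ℚ_[3]) = (n * ((n-1).choose i : ℕ)) * ((i+1:ℕ) : ℚ_[3])⁻¹ := by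
  have h := Nat.add_one_mul_choose_eq (n-1) i
  rw [Nat.sub_add_cancel hn] at h
  have hne : ((i+1 : ℕ) : ℚ_[3]) ≠ 0 := by exact_mod_cast Nat.succ_ne_zero i
  rw [eq_mul_inv_iff_mul_eq₀ hne]
  exact_mod_cast h.symm

theorem norm_choose (a i : ℕ) (hi : i ≠ 0) :
    ‖(((3^a).choose i : ℕ) : ℚ_[3])‖ ≤ (3:ℝ)^(Nat.log 3 i) / 3^a := by
  obtain ⟨i, rfl⟩ := Nat.exists_eq_succ_of_ne_zero hi
  have hpos : 0 < 3^a := by positivity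
  have h3 : ‖(3:ℚ_[3])‖ = 3⁻¹ := by simpa using Padic.norm_p (p := 3)
  have hb := norm_inv_nat (i+1) _ (Nat.succ_ne_zero i) (padicValNat_le_nat_log (i+1))
  have h3a : ‖((3^a : ℕ) : ℚ_[3])‖ = (3⁻¹:ℝ)^a := by rw [Nat.cast_pow, norm_pow]; simp only [Nat.cast_ofNat, h3]
  generalize 3^a = n at hpos h3a ⊢
  rw [Nat.succ_eq_add_one, choose_div n i hpos, norm_mul, norm_mul, norm_inv]
  have hc := norm_nat_le ((n-1).choose i)
  rw [h3a]
  calc (3⁻¹:ℝ)^a * ‖(((n-1).choose i : ℕ) : ℚ_[3])‖ * ‖((i+1:ℕ) : ℚ_[3])‖⁻¹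
      ≤ (3⁻¹:ℝ)^a * 1 * 3^(Nat.log 3 (i+1)) := by gcongr
    _ = _ := by rw [inv_pow]; field_simp

theorem norm_choose_add (a j : ℕ) :
    ‖(((3^a + j).choose j : ℕ) : ℚ_[3]) - 1‖ ≤ (3:ℝ)^(Nat.log 3 j) / 3^a := by
  have h : (((3^a + j).choose j : ℕ) : ℚ_[3]) - 1 = 
      ∑ i ∈ range j, (((3^a).choose (i+1) : ℕ) : ℚ_[3]) * (j.choose (j-(i+1)) : ℕ) := by
    rw [Nat.add_choose_eq, Finset.Nat.sum_antidiagonal_eq_sum_range_succ_mk, sum_range_succ']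
    push_cast; simp
  rw [h]
  apply IsUltrametricDist.norm_sum_le_of_forall_le_of_nonneg (by positivity)
  intro i hi
  rw [norm_mul]
  have hi := mem_range.mp hi
  have h1 := norm_choose a (i+1) (Nat.succ_ne_zero i)
  have hc : ‖((j.choose (j-(i+1)) : ℕ) : ℚ_[3])‖ ≤ 1 := norm_nat_le _
  have hl : Nat.log 3 (i+1) ≤ Nat.log 3 j := Nat.log_mono_right (by omega)
  calc _ ≤ (3:ℝ)^(Nat.log 3 (i+1)) / 3^a * 1 := by gcongr
    _ ≤ _ := by rw [mul_one]; gcongr; norm_num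

theorem centralBinom_norm (a : ℕ) (ha : 1 ≤ a) : ‖(Nat.centralBinom (3^a) : ℚ_[3]) / 2 - 1‖ ≤ 3⁻¹ := by
  have h2 : ‖(2:ℚ_[3])‖ = 1 := by
    simpa using (Padic.norm_natCast_eq_one_iff (p := 3) (n := 2)).mpr (by norm_num)
  have hb : ∀ i, i + 1 < 3^a → ‖(((3^a).choose (i+1) : ℕ) : ℚ_[3])‖ ≤ 3⁻¹ := by
    intro i hi
    refine (norm_choose a (i+1) (Nat.succ_ne_zero i)).trans ?_
    have : Nat.log 3 (i+1) < a := Nat.log_lt_of_lt_pow (by omega) hi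
    obtain ⟨b, rfl⟩ : ∃ b, a = b+1 := ⟨a-1, by omega⟩
    rw [div_le_iff₀ (by positivity), pow_succ]
    have : (3:ℝ)^(Nat.log 3 (i+1)) ≤ 3^b := pow_le_pow_right₀ (by norm_num) (by omega)
    linarith
  have hpos : 0 < 3^a := by positivity
  obtain ⟨n, hn⟩ : ∃ n, 3^a = n+1 := ⟨3^a-1, by omega⟩
  rw [hn] at hb ⊢
  have h : (Nat.centralBinom (n+1) : ℚ_[3]) = 2 +
      ∑ i ∈ range n, (((n+1).choose (i+1) : ℕ) : ℚ_[3]) * ((n+1).choose (n+1-(i+1)) : ℕ) := by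
    rw [Nat.centralBinom_eq_two_mul_choose, two_mul, Nat.add_choose_eq,
      Finset.Nat.sum_antidiagonal_eq_sum_range_succ_mk, sum_range_succ', sum_range_succ]
    push_cast; simp; ring
  have h' : (Nat.centralBinom (n+1) : ℚ_[3]) / 2 - 1 =
      (∑ i ∈ range n, (((n+1).choose (i+1) : ℕ) : ℚ_[3]) * ((n+1).choose (n+1-(i+1)) : ℕ)) / 2 := by
    rw [h]; ring
  rw [h', norm_div, h2, div_one]
  apply IsUltrametricDist.norm_sum_le_of_forall_le_of_nonneg (by positivity)
  intro i hi
  rw [norm_mul]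
  have hi := mem_range.mp hi
  calc _ ≤ (3⁻¹:ℝ) * 1 := by gcongr; exacts [hb i (by omega), norm_nat_le _]
    _ = _ := by ring

theorem A_sub_U (a : ℕ) (e : ℚ_[3]) (he : ‖e‖ ≤ 3⁻¹) :
    ‖2 * ∑ j ∈ range (3^a), ((3^a).choose (j+1) : ℚ_[3]) * e^j / Nat.centralBinom (j+1) - UU e (3^a)‖
      ≤ (1/3^a) * (1 / 3^a) := by
  have hc : ∀ k, (Nat.centralBinom k : ℚ_[3]) ≠ 0 := fun k => by
    exact_mod_cast Nat.centralBinom_ne_zero k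
  rw [mul_sum, UU, ← sum_sub_distrib]
  apply IsUltrametricDist.norm_sum_le_of_forall_le_of_nonneg (by positivity)
  intro j _
  have hr : (((3^a+j).choose (2*j+1) : ℕ) : ℚ_[3]) * Nat.centralBinom (j+1) = 2 * ((3^a).choose (j+1) * (3^a+j).choose j) := by
    exact_mod_cast choose_rel (3^a) j
  have : 2 * (((3^a).choose (j+1) : ℚ_[3]) * e^j / Nat.centralBinom (j+1)) - ((3^a+j).choose (2*j+1) : ℕ) * e^j
     = - (2 * (((3^a).choose (j+1) : ℕ) : ℚ_[3]) * ((((3^a + j).choose j : ℕ) : ℚ_[3]) - 1) * e^j * (Nat.centralBinom (j+1) : ℚ_[3])⁻¹) := by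
    have := hc (j+1)
    field_simp
    linear_combination (-e^j) * hr
  rw [this, norm_neg]
  rcases Nat.eq_zero_or_pos j with rfl | hj
  · simp
  · rw [norm_mul, norm_mul, norm_mul, norm_mul, norm_inv, norm_pow]
    have h2 : ‖(2:ℚ_[3])‖ ≤ 1 := by simpa using Padic.norm_int_le_one (p := 3) 2
    have b1 := norm_choose a (j+1) (Nat.succ_ne_zero j)
    have b2 := norm_choose_add a j
    have b3 : ‖(Nat.centralBinom (j+1) : ℚ_[3])‖⁻¹ ≤ 3^(Nat.log 3 (2*j+2)) := by
      apply norm_inv_nat _ _ (Nat.centralBinom_ne_zero _)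
      have := Nat.factorization_choose_le_log (p := 3) (n := 2*(j+1)) (k := j+1)
      rw [← Nat.factorization_def _ Nat.prime_three]
      exact this
    calc _ ≤ 1 * ((3:ℝ)^(Nat.log 3 (j+1)) / 3^a) * ((3:ℝ)^(Nat.log 3 j) / 3^a) * (3⁻¹)^j * 3^(Nat.log 3 (2*j+2)) := by gcongr
      _ = (1/3^a) * (1 / 3^a) * ((3:ℝ)^(Nat.log 3 (j+1) + Nat.log 3 j + Nat.log 3 (2*j+2)) / 3^j) := by
        rw [pow_add, pow_add, inv_pow]; field_simp
      _ ≤ (1/3^a) * (1 / 3^a) * 1 := by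
        gcongr
        rw [div_le_one (by positivity)]
        exact pow_le_pow_right₀ (by norm_num) (log_aux j hj)
      _ = _ := by ring

theorem U_norm (a : ℕ) (d : ℚ_[3]) (hd : ‖d‖ ≤ 3⁻¹) :
    ‖UU (d-3) (3^(a+1)) / 3^(a+1) - d/3‖ ≤ ‖d‖ := by
  have h3 : ‖(3:ℚ_[3])‖ = 3⁻¹ := by simpa using Padic.norm_p (p := 3)
  have h1 : ‖(1:ℚ_[3])‖ ≤ 1 := by simp
  have hadd : ∀ (x y : ℚ_[3]) (r : ℝ), ‖x‖ ≤ r → ‖y‖ ≤ r → ‖x+y‖ ≤ r := fun x y r hx hy =>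
    (Padic.nonarchimedean x y).trans (max_le hx hy)
  induction a with
  | zero =>
    have := UU_triple (d-3) 1
    have hU1 : UU (d-3) 1 = 1 := by simp [UU]
    rw [hU1] at this
    simp only [mul_one] at this
    rw [zero_add, pow_one, this]
    have : (1 * (3 + (d - 3) * (d - 3 + 4) * 1 ^ 2)) / 3 ^ 1 - d / 3 = d * (d/3 - 1) := by ring
    rw [this, norm_mul]
    have : ‖d/3 - 1‖ ≤ 1 := by
      rw [sub_eq_add_neg]
      apply hadd
      · rw [norm_div, h3, div_le_one (by norm_num)]; exact hd
      · simp
    nlinarith [norm_nonneg d]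
  | succ a ih =>
    set w := UU (d-3) (3^(a+1)) / 3^(a+1) with hw
    have hU : UU (d-3) (3^(a+1)) = 3^(a+1) * w := by rw [hw]; field_simp
    have hT : UU (d-3) (3^(a+1+1)) / 3^(a+1+1) - d/3 = (w - d/3) + 
       w * ((d-3) * (d-3+4) * 3^(2*a) * w^2*3) := by
      rw [pow_succ' 3 (a+1), pow_succ' 3 (a+1), UU_triple, hU]; field_simp; ring
    rw [hT]
    have hd3 : ‖d/3‖ = 3 * ‖d‖ := by rw [norm_div, h3]; ring
    have hwn : ‖w‖ ≤ 3 * ‖d‖ := by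
      have := hadd (w - d/3) (d/3) (3 * ‖d‖) (by linarith [norm_nonneg d]) hd3.le
      simpa using this
    have hw1 : ‖w‖ ≤ 1 := by linarith
    apply hadd _ _ _ ih
    have k1 : ‖d-3‖ ≤ 1 := by
      rw [sub_eq_add_neg]; apply hadd
      · linarith
      · rw [norm_neg, h3]; norm_num
    have k2 : ‖d-3+4‖ ≤ 1 := by
      rw [show d-3+4 = d + 1 by ring]
      apply hadd _ _ _ (by linarith) h1
    have k3 : ‖(3:ℚ_[3])^(2*a)‖ ≤ 1 := by
      rw [norm_pow, h3]; exact pow_le_one₀ (by norm_num) (by norm_num)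
    rw [norm_mul, norm_mul, norm_mul, norm_mul, norm_mul, norm_pow w, h3]
    calc _ ≤ (3*‖d‖) * (1 * 1 * 1 * 1^2 * 3⁻¹) := by gcongr
      _ = ‖d‖ := by ring

/-- Sun's conjecture (i), second part: for `m ≡ 1 (mod 3)`, `m ≠ 1`, and
`a ≥ ν₃(m−1)` (with `a ≥ 1`), one has
`(1/3^a)·∑_{k<3^a} C(2k,k)/m^k ≡ (m−1)/3 (mod 3^{ν₃(m−1)})` as 3-adic numbers. -/
theorem stmt_4 (m : ℤ) (hm : m ≡ 1 [ZMOD 3]) (hm1 : m ≠ 1) (a : ℕ)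
    (ha1 : 1 ≤ a) (ha : padicValInt 3 (m - 1) ≤ a) :
    ‖((3 : ℚ_[3]) ^ a)⁻¹ * (∑ k ∈ Finset.range (3 ^ a),
          (Nat.choose (2 * k) k : ℚ_[3]) / (m : ℚ_[3]) ^ k) -
        ((m : ℚ_[3]) - 1) / 3‖ ≤ (3 : ℝ) ^ (-(padicValInt 3 (m - 1) : ℤ)) := by
  have h3 : ‖(3:ℚ_[3])‖ = 3⁻¹ := by simpa using Padic.norm_p (p := 3)
  have hadd : ∀ (x y : ℚ_[3]) (r : ℝ), ‖x‖ ≤ r → ‖y‖ ≤ r → ‖x+y‖ ≤ r := fun x y r hx hy =>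
    (Padic.nonarchimedean x y).trans (max_le hx hy)
  have hd0 : m - 1 ≠ 0 := sub_ne_zero.mpr hm1
  have hdn : ‖((m - 1 : ℤ) : ℚ_[3])‖ = (3 : ℝ) ^ (-(padicValInt 3 (m - 1) : ℤ)) := by
    rw [← Rat.cast_intCast, Padic.eq_padicNorm, padicNorm.eq_zpow_of_nonzero (by exact_mod_cast hd0), padicValRat.of_int]
    simp
  rw [← hdn]
  have hra : (1:ℝ)/3^a ≤ ‖((m - 1 : ℤ) : ℚ_[3])‖ := by
    rw [hdn, zpow_neg, zpow_natCast, one_div]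
    gcongr
    norm_num
  have hdvd : (3:ℤ) ∣ m - 1 := hm.symm.dvd
  have hr3 : ‖((m - 1 : ℤ) : ℚ_[3])‖ ≤ 3⁻¹ := by
    obtain ⟨t, ht⟩ := hdvd
    rw [ht, Int.cast_mul, norm_mul]
    have := Padic.norm_int_le_one (p := 3) t
    simp only [Int.cast_ofNat, h3]
    linarith
  rw [show ((m : ℚ_[3]) - 1) = ((m - 1 : ℤ) : ℚ_[3]) by push_cast; ring]
  have hmd : (m : ℚ_[3]) = ((m - 1 : ℤ) : ℚ_[3]) - 3 + 4 := by push_cast; ring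
  generalize ((m - 1 : ℤ) : ℚ_[3]) = d at *
  rw [hmd]
  set e := d - 3 with he
  have hm1' : ‖(e + 4) - 1‖ ≤ 3⁻¹ := by rw [he, show d - 3 + 4 - 1 = d by ring]; exact hr3
  have hmn : ‖e + 4‖ = 1 := by
    apply le_antisymm
    · have := hadd (e + 4 - 1) 1 1 (hm1'.trans (by norm_num)) (by simp)
      simpa using this
    · by_contra hlt
      push Not at hlt
      have h := Padic.nonarchimedean (e + 4) (-(e + 4 - 1))
      rw [show e + 4 + -(e + 4 - 1) = 1 by ring, norm_neg, norm_one] at h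
      rcases le_max_iff.mp h with h | h
      · linarith
      · have := h.trans hm1'
        norm_num at this
  have hm0 : e + 4 ≠ 0 := by
    intro h; rw [h] at hmn; simp at hmn
  have hen : ‖e‖ ≤ 3⁻¹ := by
    rw [he, sub_eq_add_neg]; apply hadd _ _ _ hr3; rw [norm_neg, h3]
  have hA := A_sub_U a e hen
  have hU : ‖UU e (3^a) / 3^a - d/3‖ ≤ ‖d‖ := by
    have := U_norm (a-1) d hr3
    rwa [Nat.sub_add_cancel ha1] at this
  have hF := F_identity e (3^a)
  have hS : ∑ k ∈ Finset.range (3 ^ a), (Nat.choose (2 * k) k : ℚ_[3]) / (e + 4) ^ k =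
      ((e+4)⁻¹)^(3^a-1) * ∑ k ∈ range (3^a), (Nat.centralBinom k : ℚ_[3]) * (e+4)^(3^a-1-k) := by
    rw [mul_sum]
    apply sum_congr rfl
    intro k hk
    have hk := mem_range.mp hk
    rw [show 3^a-1 = (3^a-1-k) + k by omega, pow_add, show 3^a-1-k+k-k = 3^a-1-k by omega, Nat.centralBinom_eq_two_mul_choose]
    have : ((e+4)⁻¹)^(3^a-1-k) * (e+4)^(3^a-1-k) = 1 := by
      rw [← mul_pow, inv_mul_cancel₀ hm0, one_pow]
    rw [inv_pow (e+4) k]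
    linear_combination (-((Nat.choose (2 * k) k : ℚ_[3]) / (e + 4) ^ k)) * this
  rw [hS, hF]
  have hC := centralBinom_norm a ha1
  have hM : ‖((e+4)⁻¹)^(3^a-1) - 1‖ ≤ 3⁻¹ := by
    have hinv : ‖(e+4)⁻¹‖ ≤ 1 := by rw [norm_inv, hmn]; simp
    have hinv1 : ‖(e+4)⁻¹ - 1‖ ≤ 3⁻¹ := by
      have : (e+4)⁻¹ - 1 = -((e+4)⁻¹ * ((e+4) - 1)) := by field_simp; ring
      rw [this, norm_neg, norm_mul]
      calc _ ≤ 1 * (3⁻¹:ℝ) := by gcongr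
        _ = _ := by ring
    induction 3^a-1 with
    | zero => simp
    | succ k ih =>
      rw [show ((e+4)⁻¹)^(k+1) - 1 = (e+4)⁻¹ * (((e+4)⁻¹)^k - 1) + ((e+4)⁻¹ - 1) by ring]
      apply hadd _ _ _ _ hinv1
      rw [norm_mul]
      calc _ ≤ 1 * (3⁻¹:ℝ) := by gcongr
        _ = _ := by ring
  set A := ∑ j ∈ range (3^a), ((3^a).choose (j+1) : ℚ_[3]) * e^j / Nat.centralBinom (j+1) with hAdef
  set c := (Nat.centralBinom (3^a) : ℚ_[3]) / 2 with hc
  set M := ((e+4)⁻¹)^(3^a-1) with hMdef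
  have h2A : ‖2 * A / 3^a - d/3‖ ≤ ‖d‖ := by
    rw [show 2 * A / 3^a - d/3 = (2*A - UU e (3^a)) / 3^a + (UU e (3^a) / 3^a - d/3) by ring]
    apply hadd _ _ _ _ hU
    rw [norm_div, norm_pow, h3, inv_pow, div_inv_eq_mul]
    calc _ ≤ (1 / 3^a * (1/3^a) : ℝ) * 3^a := by gcongr
      _ = 1 / 3^a := by field_simp
      _ ≤ _ := hra
  have hd3 : ‖d/3‖ = 3 * ‖d‖ := by rw [norm_div, h3]; ring
  have h2An : ‖2 * A / 3^a‖ ≤ 3 * ‖d‖ := by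
    have := hadd (2 * A / 3^a - d/3) (d/3) (3 * ‖d‖) (by linarith [norm_nonneg d]) hd3.le
    simpa using this
  have hcn : ‖c‖ ≤ 1 := by
    have := hadd (c - 1) 1 1 (hC.trans (by norm_num)) (by simp)
    simpa using this
  have hcM : ‖c * M - 1‖ ≤ 3⁻¹ := by
    rw [show c * M - 1 = c * (M - 1) + (c - 1) by ring]
    apply hadd _ _ _ _ hC
    rw [norm_mul]
    calc _ ≤ 1 * (3⁻¹:ℝ) := by gcongr
      _ = _ := by ring
  have : ((3:ℚ_[3])^a)⁻¹ * (M * (Nat.centralBinom (3^a) * A)) - d/3 =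
      (c * M - 1) * (2 * A / 3^a) + (2 * A / 3^a - d/3) := by
    rw [hc]; field_simp; ring
  rw [this]
  apply hadd _ _ _ _ h2A
  rw [norm_mul]
  calc _ ≤ (3⁻¹:ℝ) * (3 * ‖d‖) := by gcongr
    _ = _ := by ring
end

section
/- Let m ≡ 1 (mod 3), m ≠ 1, and let a > ν₃(m−1) be an integer. Then (1/3^a)·∑_{k=0}^{3^a−1} (−1)^k·C(3^a−1,k)·C(2k,k)/m^k ≡ −(m−1)/3 (mod 3^{ν₃(m−1)}) as 3-adic numbers. -/
def VV (k : ℤ) (x : ℚ_[3]) : Prop := ‖x‖ ≤ (3 : ℝ) ^ (-k)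

lemma VV_mono {k l : ℤ} {x : ℚ_[3]} (h : VV k x) (hl : l ≤ k) : VV l x :=
  le_trans h (zpow_le_zpow_right₀ (by norm_num) (by omega))

lemma VV_add {k : ℤ} {x y : ℚ_[3]} (hx : VV k x) (hy : VV k y) : VV k (x + y) :=
  le_trans (Padic.nonarchimedean x y) (max_le hx hy)

lemma VV_neg {k : ℤ} {x : ℚ_[3]} (hx : VV k x) : VV k (-x) := by
  unfold VV at *; rwa [norm_neg]

lemma VV_sub {k : ℤ} {x y : ℚ_[3]} (hx : VV k x) (hy : VV k y) : VV k (x - y) := by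
  rw [sub_eq_add_neg]; exact VV_add hx (VV_neg hy)

lemma VV_mul {k l : ℤ} {x y : ℚ_[3]} (hx : VV k x) (hy : VV l y) : VV (k + l) (x * y) := by
  unfold VV at *
  rw [norm_mul, neg_add, zpow_add₀ (by norm_num)]
  exact mul_le_mul hx hy (norm_nonneg _) (by positivity)

lemma VV_zero (k : ℤ) : VV k 0 := by unfold VV; rw [norm_zero]; positivity

lemma VV_sum {ι : Type*} (s : Finset ι) (f : ι → ℚ_[3]) (k : ℤ) (h : ∀ i ∈ s, VV k (f i)) :
    VV k (∑ i ∈ s, f i) := by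
  classical
  induction s using Finset.induction_on with
  | empty => simpa using VV_zero k
  | insert i s hi ih =>
    rw [Finset.sum_insert hi]
    exact VV_add (h i (by simp)) (ih fun j hj => h j (by simp [hj]))

lemma VV_int (n : ℤ) : VV 0 (n : ℚ_[3]) := by
  unfold VV; simpa using Padic.norm_int_le_one n

lemma VV_nat (n : ℕ) : VV 0 (n : ℚ_[3]) := by simpa using VV_int n

lemma VV_one : VV 0 (1 : ℚ_[3]) := by simpa using VV_int 1

lemma VV_dvd {k : ℕ} {n : ℤ} (h : (3 : ℤ) ^ k ∣ n) : VV k (n : ℚ_[3]) := by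
  unfold VV
  have := (Padic.norm_int_le_pow_iff_dvd (p := 3) n k).2 (by exact_mod_cast h)
  exact_mod_cast this

lemma VV_pow {k : ℤ} {x : ℚ_[3]} (h : VV k x) (j : ℕ) : VV (j * k) (x ^ j) := by
  induction j with
  | zero => simpa using VV_one
  | succ j ih =>
    rw [pow_succ]
    have := VV_mul ih h
    convert this using 1
    push_cast; ring

lemma VV_inv_nat {d k : ℕ} (hd : d ≠ 0) (h : padicValNat 3 d ≤ k) :
    VV (-k) ((d : ℚ_[3])⁻¹) := by
  unfold VV
  rw [norm_inv, Padic.norm_eq_zpow_neg_valuation (by exact_mod_cast hd), Padic.valuation_natCast]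
  rw [← zpow_neg]
  simp only [Nat.cast_ofNat]
  exact zpow_le_zpow_right₀ (by norm_num) (by omega)

lemma norm_unit {x : ℚ_[3]} {y : ℚ_[3]} (hy : ‖y‖ = 1) (h : VV 1 (x - y)) : ‖x‖ = 1 := by
  have h1 : ‖x - y‖ < 1 := lt_of_le_of_lt h (by norm_num)
  have : x = (x - y) + y := by ring
  rw [this, Padic.add_eq_max_of_ne (by rw [hy]; exact h1.ne), hy, max_eq_right h1.le]

lemma VV_inv_unit {x : ℚ_[3]} (hx : ‖x‖ = 1) : VV 0 x⁻¹ := by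
  unfold VV; simp [hx]

noncomputable def ff (j : ℕ) : ℚ_[3] := ((2 * j + 1 : ℕ) : ℚ_[3])⁻¹ * ((Nat.centralBinom j : ℕ) : ℚ_[3])⁻¹

lemma VV_ff (j : ℕ) : VV (-(Nat.log 3 (2 * j + 1) : ℤ) - Nat.log 3 (2 * j)) (ff j) := by
  have h1 := VV_inv_nat (d := 2 * j + 1) (by omega) (padicValNat_le_nat_log (p := 3) (2 * j + 1))
  have h2 := VV_inv_nat (d := Nat.centralBinom j) (k := Nat.log 3 (2 * j)) (Nat.centralBinom_ne_zero j) (by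
    have := Nat.factorization_choose_le_log (p := 3) (n := 2 * j) (k := j)
    rwa [Nat.factorization_def _ (by norm_num : Nat.Prime 3)] at this)
  exact VV_mul h1 h2

lemma log_bound (j : ℕ) (hj : 1 ≤ j) :
    2 * Nat.log 3 (2 * j + 1) + Nat.log 3 (2 * j) ≤ j + 1 := by
  have hmono : Nat.log 3 (2 * j) ≤ Nat.log 3 (2 * j + 1) := Nat.log_mono_right (by omega)
  have hp : 3 ^ Nat.log 3 (2 * j + 1) ≤ 2 * j + 1 := Nat.pow_log_le_self 3 (by omega)
  by_cases h : j < 13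
  · have : ∀ j < 13, 1 ≤ j → 2 * Nat.log 3 (2 * j + 1) + Nat.log 3 (2 * j) ≤ j + 1 := by decide
    exact this j h hj
  · have key : ∀ s : ℕ, 6 * (s + 3) ≤ 3 ^ (s + 3) + 1 := by
      intro s
      induction s with
      | zero => norm_num
      | succ s ih =>
        have : 3 ^ (s + 1 + 3) = 3 * 3 ^ (s + 3) := by ring
        omega
    by_cases hs : Nat.log 3 (2 * j + 1) ≤ 3
    · omega
    · obtain ⟨s, hs'⟩ : ∃ s, Nat.log 3 (2 * j + 1) = s + 3 := ⟨Nat.log 3 (2 * j + 1) - 3, by omega⟩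
      have h2 := key s
      rw [hs'] at hp hmono ⊢
      omega

open Polynomial

noncomputable def PP (J : ℕ) : ℚ_[3][X] := ∑ j ∈ Finset.range J, C (ff j) * X ^ j

lemma ff_rec1 (j : ℕ) : ff j * (4 * j + 2) = 2 * ((Nat.centralBinom j : ℕ) : ℚ_[3])⁻¹ := by
  unfold ff
  have h1 : ((2 * j + 1 : ℕ) : ℚ_[3]) ≠ 0 := by exact_mod_cast (by omega : 2 * j + 1 ≠ 0)
  have h2 : ((Nat.centralBinom j : ℕ) : ℚ_[3]) ≠ 0 := by exact_mod_cast Nat.centralBinom_ne_zero j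
  have h3 : (4 * j + 2 : ℚ_[3]) = 2 * ((2 * j + 1 : ℕ) : ℚ_[3]) := by push_cast; ring
  rw [h3]; field_simp

lemma ff_rec2 (j : ℕ) : ff j * (j + 1) = 2 * ((Nat.centralBinom (j + 1) : ℕ) : ℚ_[3])⁻¹ := by
  unfold ff
  have h1 : ((2 * j + 1 : ℕ) : ℚ_[3]) ≠ 0 := by exact_mod_cast (by omega : 2 * j + 1 ≠ 0)
  have h2 : ((Nat.centralBinom j : ℕ) : ℚ_[3]) ≠ 0 := by exact_mod_cast Nat.centralBinom_ne_zero j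
  have h4 : ((Nat.centralBinom (j+1) : ℕ) : ℚ_[3]) ≠ 0 := by
    exact_mod_cast Nat.centralBinom_ne_zero (j+1)
  have h3 : ((j:ℚ_[3]) + 1) * (Nat.centralBinom (j+1) : ℕ) = 2 * ((2 * j + 1 : ℕ) : ℚ_[3]) * (Nat.centralBinom j : ℕ) := by
    exact_mod_cast Nat.succ_mul_centralBinom_succ j
  field_simp
  linear_combination h3

lemma PP_ode (J : ℕ) : X * (4 - X) * derivative (PP J) + (2 - X) * PP J
    = 2 - C (2 * ((Nat.centralBinom J : ℕ) : ℚ_[3])⁻¹) * X ^ J := by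
  induction J with
  | zero => simp [PP, C_ofNat]
  | succ J ih =>
    have hs : PP (J + 1) = PP J + C (ff J) * X ^ J := by
      unfold PP; rw [Finset.sum_range_succ]
    have hX : (X : ℚ_[3][X]) * derivative (X ^ J) = (J : ℚ_[3][X]) * X ^ J := by
      rcases J with _ | J
      · simp
      · rw [derivative_X_pow]; simp; ring
    rw [hs, derivative_add, derivative_C_mul, ← ff_rec2]
    rw [← ff_rec1] at ih
    simp only [C_mul, C_add, C_ofNat, C_1, map_natCast] at ih ⊢
    linear_combination ih + C (ff J) * (4 - X) * hX

noncomputable def AA : ℚ_[3][X] := (X - 1) * (X - 3)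
noncomputable def ww : ℚ_[3][X] := X * (3 - X) ^ 2
noncomputable def EE (J : ℕ) : ℚ_[3][X] := (PP J).comp ww * AA - 3 * PP J

lemma EE_ode (J : ℕ) : ∃ R, X * (4 - X) * derivative (EE J) + (2 - X) * EE J = X ^ J * R := by
  set c := C (2 * ((Nat.centralBinom J : ℕ) : ℚ_[3])⁻¹) with hc
  refine ⟨-3 * c * ((3 - X) ^ 2) ^ J + 3 * c, ?_⟩
  have h1 := PP_ode J
  have h2 := congrArg (fun p => p.comp ww) h1
  simp only [add_comp, mul_comp, sub_comp, X_comp, ofNat_comp, C_comp, pow_comp] at h1 h2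
  simp only [← hc, Nat.cast_ofNat] at h1 h2
  have hd : derivative (EE J) = (derivative ww * (derivative (PP J)).comp ww) * AA
      + (PP J).comp ww * derivative AA - 3 * derivative (PP J) := by
    unfold EE
    rw [derivative_sub, derivative_mul, derivative_comp]
    simp
  have hw : derivative ww = 3 * AA := by
    unfold ww AA
    simp [derivative_mul, derivative_pow, C_ofNat]
    ring
  have hA : derivative AA = 2 * X - 4 := by
    unfold AA
    simp [derivative_mul]
    ring
  rw [hd, hw, hA]
  have hp : ww ^ J = X ^ J * ((3 - X) ^ 2) ^ J := by unfold ww; rw [mul_pow]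
  rw [hp] at h2
  unfold EE
  have e1 : X * (4 - X) * AA ^ 2 = ww * (4 - ww) := by unfold AA ww; ring
  have e2 : X * (4 - X) * (2 * X - 4) + (2 - X) * AA = 3 * (2 - ww) := by unfold AA ww; ring
  linear_combination 3 * h2 - 3 * h1 + 3 * (derivative (PP J)).comp ww * e1 + (PP J).comp ww * e2

lemma EE_coeff (J k : ℕ) (hk : k < J) : (EE J).coeff k = 0 := by
  obtain ⟨R, hR⟩ := EE_ode J
  have h' : X * (C 4 * derivative (EE J)) - X * (X * derivative (EE J)) + C 2 * EE J - X * EE J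
      = X ^ J * R := by
    rw [← hR]; simp only [C_ofNat]; ring
  have h0 : ∀ k < J, (X * (C 4 * derivative (EE J)) - X * (X * derivative (EE J)) + C 2 * EE J - X * EE J).coeff k = 0 := by
    intro k hk
    rw [h', coeff_X_pow_mul', if_neg (by omega)]
  induction k with
  | zero =>
    have := h0 0 hk
    simpa using this
  | succ k ih =>
    have e := ih (by omega)
    have := h0 (k+1) hk
    have hx : (X * derivative (EE J)).coeff k = k * (EE J).coeff k := by
      rcases k with _ | k
      · simp
      · rw [coeff_X_mul, coeff_derivative]; push_cast; ring
    simp only [coeff_add, coeff_sub, coeff_X_mul, coeff_C_mul, coeff_derivative, hx, e] at this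
    have h3 : ((4 * k + 6 : ℕ) : ℚ_[3]) * (EE J).coeff (k+1) = 0 := by
      push_cast
      linear_combination this
    rcases mul_eq_zero.1 h3 with h | h
    · exact absurd h (by exact_mod_cast (by omega : 4 * k + 6 ≠ 0))
    · exact h

lemma EE_coeff_bound (J L : ℕ) (hL : ∀ j < J, VV (-(L : ℤ)) (ff j)) (i : ℕ) :
    VV (-(L : ℤ)) ((EE J).coeff i) := by
  have h : EE J = ∑ j ∈ Finset.range J, C (ff j) *
      (((X * (3 - X) ^ 2) ^ j * ((X - 1) * (X - 3)) - 3 * X ^ j : ℤ[X]).map (Int.castRingHom ℚ_[3])) := by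
    unfold EE PP
    rw [Polynomial.sum_comp, Finset.sum_mul, Finset.mul_sum, ← Finset.sum_sub_distrib]
    refine Finset.sum_congr rfl fun j _ => ?_
    simp [ww, AA]
    ring
  rw [h, finsetSum_coeff]
  refine VV_sum _ _ _ fun j hj => ?_
  rw [coeff_C_mul, coeff_map]
  have := VV_mul (hL j (Finset.mem_range.1 hj)) (VV_int (((X * (3 - X) ^ 2) ^ j * ((X - 1) * (X - 3)) - 3 * X ^ j : ℤ[X]).coeff i))
  simpa using this

lemma EE_eval (J L : ℕ) (hL : ∀ j < J, VV (-(L : ℤ)) (ff j)) (z : ℚ_[3]) (hz : VV 1 z) :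
    VV (J - L) ((EE J).eval z) := by
  rw [eval_eq_sum_range]
  refine VV_sum _ _ _ fun i _ => ?_
  by_cases hi : i < J
  · rw [EE_coeff J i hi, zero_mul]; exact VV_zero _
  · exact VV_mono (VV_mul (EE_coeff_bound J L hL i) (VV_pow hz i)) (by omega)

lemma trinom (N : ℕ) (m : ℚ_[3]) :
    ∑ k ∈ Finset.range (N + 1), (-1) ^ k * (N.choose k : ℚ_[3]) * ((2 * k).choose k : ℚ_[3]) * m ^ (N - k)
     = ∑ k ∈ Finset.range (N + 1), (N.choose k : ℚ_[3]) * ((2 * k).choose k : ℚ_[3]) * (m - 4) ^ (N - k) := by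
  have key : (-(1 + X) ^ 2 + C m * X : ℚ_[3][X]) ^ N = (-(1 + -X) ^ 2 + C (m - 4) * X) ^ N := by
    congr 1
    simp only [C_sub, C_ofNat]
    ring
  rw [add_pow (-(1 + X) ^ 2), add_pow (-(1 + -X) ^ 2)] at key
  have h := congrArg (fun p => p.coeff N) key
  simp only [finsetSum_coeff] at h
  have aux : ∀ (k : ℕ) (c : ℚ_[3]) (p : ℚ_[3][X]), k ≤ N →
      ((-p ^ 2) ^ k * (C c * X) ^ (N - k) * (N.choose k : ℚ_[3][X])).coeff N
       = (-1) ^ k * (p ^ (2 * k)).coeff k * c ^ (N - k) * (N.choose k) := by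
    intro k c p hk
    have : ((-p ^ 2) ^ k * (C c * X) ^ (N - k) * (N.choose k : ℚ_[3][X]))
        = C ((-1) ^ k * c ^ (N - k) * (N.choose k)) * (p ^ (2 * k) * X ^ (N - k)) := by
      simp only [C_mul, C_pow, map_natCast, C_neg, C_1]
      rw [mul_pow, neg_pow, pow_mul]
      ring
    rw [this, coeff_C_mul, coeff_mul_X_pow', if_pos (by omega), Nat.sub_sub_self hk]
    ring
  convert h using 1
  · refine Finset.sum_congr rfl fun k hk => ?_
    rw [aux k m _ (by simpa [Nat.lt_succ_iff] using hk), coeff_one_add_X_pow]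
    ring
  · refine Finset.sum_congr rfl fun k hk => ?_
    rw [aux k _ _ (by simpa [Nat.lt_succ_iff] using hk)]
    have : ((1 + -X : ℚ_[3][X]) ^ (2 * k)).coeff k = (-1) ^ k * ((2 * k).choose k) := by
      have e : (1 + -X : ℚ_[3][X]) ^ (2 * k) = ((1 + X) ^ (2 * k)).comp (C (-1) * X) := by simp
      rw [e, comp_C_mul_X_coeff, coeff_one_add_X_pow]
      ring
    rw [this]
    have h2 : ((-1 : ℚ_[3]) ^ k) * (-1) ^ k = 1 := by rw [← mul_pow]; simp
    linear_combination -(N.choose k : ℚ_[3]) * ((2 * k).choose k : ℚ_[3]) * (m - 4) ^ (N - k) * h2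

lemma VV_three_pow (a : ℕ) : VV a ((3 : ℚ_[3]) ^ a) := by
  have := VV_dvd (k := a) (n := 3 ^ a) dvd_rfl
  simpa using this

lemma VV_n_div (a d : ℕ) (hd : d ≠ 0) : VV ((a : ℤ) - padicValNat 3 d) ((3 : ℚ_[3]) ^ a * (d : ℚ_[3])⁻¹) := by
  have := VV_mul (VV_three_pow a) (VV_inv_nat hd le_rfl)
  exact VV_mono this (by omega)

lemma log_le_a (a j : ℕ) (hj : j < 3 ^ a) : Nat.log 3 (2 * j + 1) ≤ a := by
  have : Nat.log 3 (2 * j + 1) < a + 1 := by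
    apply Nat.log_lt_of_lt_pow (by omega)
    rw [pow_succ]; omega
  omega

lemma unit_y (a j : ℕ) (hj : j + 1 < 3 ^ a) :
    ‖(1 - 2 * ((3 : ℚ_[3]) ^ a * ((2 * j + 3 : ℕ) : ℚ_[3])⁻¹))‖ = 1 := by
  by_cases h : padicValNat 3 (2 * j + 3) < a
  · refine norm_unit (y := 1) (by simp) ?_
    have h1 := VV_n_div a (2 * j + 3) (by omega)
    have h2 := VV_neg (VV_mul (VV_int 2) h1)
    have h3 := VV_mono (l := 1) h2 (by omega)
    convert h3 using 1
    push_cast; ring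
  · have hd : 3 ^ a ∣ 2 * j + 3 := by
      rw [padicValNat_dvd_iff_le (by omega)]; omega
    obtain ⟨c, hc⟩ := hd
    have hc1 : c = 1 := by
      have h1 : c < 2 := by
        by_contra hcc
        have : 3 ^ a * 2 ≤ 3 ^ a * c := Nat.mul_le_mul_left _ (by omega)
        omega
      have h2 : c ≠ 0 := by rintro rfl; omega
      omega
    rw [hc, hc1]
    push_cast
    rw [mul_one, mul_inv_cancel₀ (pow_ne_zero _ (by norm_num))]
    norm_num

lemma tau_rec (N j : ℕ) (hj : j + 1 ≤ N) :
    (N.choose (j + 1) * Nat.centralBinom (N - (j + 1))) * ((j + 1) * (2 * (2 * (N - (j + 1)) + 1)))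
     = (N.choose j * Nat.centralBinom (N - j)) * (N - j) ^ 2 := by
  obtain ⟨r, rfl⟩ := Nat.exists_eq_add_of_le hj
  have h1 := Nat.choose_succ_right_eq (j + 1 + r) j
  have h2 := Nat.succ_mul_centralBinom_succ r
  have e1 : j + 1 + r - (j + 1) = r := by omega
  have e2 : j + 1 + r - j = r + 1 := by omega
  rw [e2] at h1
  rw [e1, e2]
  calc _ = ((j + 1 + r).choose (j + 1) * (j + 1)) * (2 * (2 * r + 1) * r.centralBinom) := by ring
    _ = _ := by rw [h1, ← h2]; ring

lemma rho (a : ℕ) (j : ℕ) (hj : j < 3 ^ a) : ∃ ρ : ℚ_[3],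
    VV ((a : ℤ) - Nat.log 3 (2 * j + 1)) (ρ - 1) ∧
    (((3 ^ a - 1).choose j * Nat.centralBinom (3 ^ a - 1 - j) : ℕ) : ℚ_[3])
      = (Nat.centralBinom (3 ^ a - 1) : ℚ_[3]) * (-1) ^ j * ff j * ρ := by
  induction j with
  | zero => exact ⟨1, by simpa using VV_zero _, by simp [ff]⟩
  | succ j ih =>
    obtain ⟨ρ, hρ, hτ⟩ := ih (by omega)
    set x : ℚ_[3] := (3 : ℚ_[3]) ^ a * ((j + 1 : ℕ) : ℚ_[3])⁻¹ with hx
    set y : ℚ_[3] := 1 - 2 * ((3 : ℚ_[3]) ^ a * ((2 * j + 3 : ℕ) : ℚ_[3])⁻¹) with hy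
    have hyu : ‖y‖ = 1 := unit_y a j hj
    have hy0 : y ≠ 0 := by intro h; rw [h] at hyu; simp at hyu
    have hla : Nat.log 3 (2 * (j + 1) + 1) ≤ a := log_le_a a _ hj
    have hl1 : Nat.log 3 (2 * j + 1) ≤ Nat.log 3 (2 * (j + 1) + 1) := Nat.log_mono_right (by omega)
    set s := Nat.log 3 (2 * (j + 1) + 1) with hs
    have hxV : VV ((a : ℤ) - s) x := by
      refine VV_mono (VV_n_div a (j + 1) (by omega)) ?_
      have h1 := padicValNat_le_nat_log (p := 3) (j + 1)
      have h2 : Nat.log 3 (j + 1) ≤ s := Nat.log_mono_right (by omega)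
      omega
    have hwV : VV ((a : ℤ) - s) (1 - y) := by
      have h0 : VV ((a : ℤ) - s) ((3 : ℚ_[3]) ^ a * ((2 * j + 3 : ℕ) : ℚ_[3])⁻¹) := by
        refine VV_mono (VV_n_div a (2 * j + 3) (by omega)) ?_
        have h1 := padicValNat_le_nat_log (p := 3) (2 * j + 3)
        have h2 : Nat.log 3 (2 * j + 3) ≤ s := Nat.log_mono_right (by omega)
        omega
      have h3 := VV_mul (VV_int 2) h0
      rw [zero_add] at h3
      convert h3 using 1
      rw [hy]; push_cast; ring
    have hx0 : VV 0 x := VV_mono hxV (by omega)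
    have hρ0 : VV 0 ρ := by
      have := VV_add (VV_mono (l := 0) hρ (by omega)) VV_one
      simpa using this
    have hr : VV ((a : ℤ) - s) ((1 - x) ^ 2 * y⁻¹ - 1) := by
      have e : (1 - x) ^ 2 * y⁻¹ - 1 = y⁻¹ * ((1 - y) + (x - (2 : ℤ)) * x) := by
        field_simp; push_cast; ring
      rw [e]
      have h1 := VV_mul (VV_sub hx0 (VV_int 2)) hxV
      rw [zero_add] at h1
      have h2 := VV_mul (VV_inv_unit hyu) (VV_add hwV h1)
      rwa [zero_add] at h2
    refine ⟨ρ * ((1 - x) ^ 2 * y⁻¹), ?_, ?_⟩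
    · have e : ρ * ((1 - x) ^ 2 * y⁻¹) - 1 = ρ * ((1 - x) ^ 2 * y⁻¹ - 1) + (ρ - 1) := by ring
      rw [e]
      have h1 := VV_mul hρ0 hr
      rw [zero_add] at h1
      exact VV_add h1 (VV_mono hρ (by omega))
    · have hrec := tau_rec (3 ^ a - 1) j (by omega)
      have hrec' := congrArg (Nat.cast : ℕ → ℚ_[3]) hrec
      rw [Nat.cast_mul, Nat.cast_mul (_ * _) ((_ - _) ^ 2), hτ] at hrec'
      set τ := (((3 ^ a - 1).choose (j + 1) * Nat.centralBinom (3 ^ a - 1 - (j + 1)) : ℕ) : ℚ_[3])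
      have c1 : ((2 * (3 ^ a - 1 - (j + 1)) + 1 : ℕ) : ℚ_[3]) = 2 * 3 ^ a - ((2 * j + 3 : ℕ) : ℚ_[3]) := by
        rw [eq_sub_iff_add_eq]
        have : 2 * (3 ^ a - 1 - (j + 1)) + 1 + (2 * j + 3) = 2 * 3 ^ a := by omega
        exact_mod_cast this
      have c2 : ((3 ^ a - 1 - j : ℕ) : ℚ_[3]) = 3 ^ a - ((j + 1 : ℕ) : ℚ_[3]) := by
        rw [eq_sub_iff_add_eq]
        have : 3 ^ a - 1 - j + (j + 1) = 3 ^ a := by omega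
        exact_mod_cast this
      rw [Nat.cast_mul (j + 1), Nat.cast_mul 2 (2 * (3 ^ a - 1 - (j + 1)) + 1), c1, Nat.cast_pow, c2] at hrec'
      have d1 : ((j + 1 : ℕ) : ℚ_[3]) ≠ 0 := by exact_mod_cast (by omega : j + 1 ≠ 0)
      have d2 : ((2 * j + 3 : ℕ) : ℚ_[3]) ≠ 0 := by exact_mod_cast (by omega : 2 * j + 3 ≠ 0)
      have hf : ff (j + 1) * (2 * ((2 * j + 3 : ℕ) : ℚ_[3])) = ff j * ((j + 1 : ℕ) : ℚ_[3]) := by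
        have h1 := ff_rec1 (j + 1)
        have h2 := ff_rec2 j
        push_cast at h1 h2 ⊢
        linear_combination h1 - h2
      have hx' : x * ((j + 1 : ℕ) : ℚ_[3]) = 3 ^ a := by rw [hx]; field_simp
      have hy' : y * ((2 * j + 3 : ℕ) : ℚ_[3]) = ((2 * j + 3 : ℕ) : ℚ_[3]) - 2 * 3 ^ a := by
        rw [hy]; field_simp
      generalize ((2 * j + 3 : ℕ) : ℚ_[3]) = B at *
      generalize ((j + 1 : ℕ) : ℚ_[3]) = A at *
      generalize (3 : ℚ_[3]) ^ a = n at *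
      generalize (Nat.centralBinom (3 ^ a - 1) : ℚ_[3]) = c0 at *
      have hff : ff (j + 1) = ff j * A / (2 * B) := by
        rw [eq_div_iff (by simpa using d2)]; exact hf
      rw [hff, pow_succ]
      have hτ2 : τ * (A * (2 * (-(y * B)))) = c0 * (-1) ^ j * ff j * ρ * (A * (x - 1)) ^ 2 := by
        have q : A * (x - 1) = n - A := by rw [← hx']; ring
        rw [q, hy']; push_cast at hrec'; linear_combination hrec'
      field_simp
      apply mul_right_cancel₀ d1
      linear_combination -hτ2

lemma cb_mod (a : ℕ) : Nat.centralBinom (3 ^ a) ≡ 2 [MOD 3] := by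
  have : Fact (Nat.Prime 3) := ⟨by norm_num⟩
  induction a with
  | zero => decide
  | succ a ih =>
    have h := Choose.choose_modEq_choose_mod_mul_choose_div_nat (n := 2 * 3 ^ (a + 1)) (k := 3 ^ (a + 1)) (p := 3)
    have e1 : 2 * 3 ^ (a + 1) % 3 = 0 := by rw [pow_succ]; omega
    have e2 : 3 ^ (a + 1) % 3 = 0 := by rw [pow_succ]; omega
    have e3 : 2 * 3 ^ (a + 1) / 3 = 2 * 3 ^ a := by rw [pow_succ]; omega
    have e4 : 3 ^ (a + 1) / 3 = 3 ^ a := by rw [pow_succ]; omega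
    rw [e1, e2, e3, e4] at h
    simp only [Nat.choose_self, one_mul] at h
    exact h.trans ih

lemma cb_unit (a : ℕ) (ha : 1 ≤ a) : ∃ u : ℚ_[3], VV 1 (u + 1) ∧
    (Nat.centralBinom (3 ^ a - 1) : ℚ_[3]) = 3 ^ a * u := by
  have h := Nat.succ_mul_centralBinom_succ (3 ^ a - 1)
  have hp : 0 < 3 ^ a := by positivity
  rw [Nat.sub_add_cancel hp] at h
  have hv : ((2 * (3 ^ a - 1) + 1 : ℕ) : ℚ_[3]) = 2 * 3 ^ a - 1 := by
    rw [eq_sub_iff_add_eq]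
    have : 2 * (3 ^ a - 1) + 1 + 1 = 2 * 3 ^ a := by omega
    exact_mod_cast this
  have h' := congrArg (Nat.cast : ℕ → ℚ_[3]) h
  rw [Nat.cast_mul, Nat.cast_mul, Nat.cast_mul, hv] at h'
  have h3 := VV_mono (l := 1) (VV_three_pow a) (by omega)
  set D : ℚ_[3] := 2 * (2 * 3 ^ a - 1) with hD
  have hDu : ‖D‖ = 1 := by
    refine norm_unit (y := 1) (by simp) ?_
    have h4 := VV_sub (VV_mul (VV_int 4) h3) (VV_dvd (k := 1) (n := 3) (by norm_num))
    rw [zero_add] at h4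
    convert h4 using 1
    rw [hD]; push_cast; ring
  have hD0 : D ≠ 0 := by intro h; rw [h] at hDu; simp at hDu
  refine ⟨(Nat.centralBinom (3 ^ a)) * D⁻¹, ?_, ?_⟩
  · have e : (Nat.centralBinom (3 ^ a) : ℚ_[3]) * D⁻¹ + 1
        = D⁻¹ * ((((Nat.centralBinom (3 ^ a) : ℤ) - 2 : ℤ) : ℚ_[3]) + (4 : ℤ) * 3 ^ a) := by
      field_simp
      rw [hD]; push_cast; ring
    rw [e]
    have hc : VV 1 ((((Nat.centralBinom (3 ^ a) : ℤ) - 2 : ℤ) : ℚ_[3])) := by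
      have := VV_dvd (k := 1) (n := (Nat.centralBinom (3 ^ a) : ℤ) - 2) (by
        have := (cb_mod a).symm.dvd
        simpa using this)
      simpa using this
    have h4 := VV_mul (VV_int 4) h3
    have := VV_mul (VV_inv_unit hDu) (VV_add hc h4)
    simpa using this
  · field_simp
    rw [hD]; push_cast at h'; linear_combination -h'

lemma stmt_6_aux (m : ℤ) (hm : m ≡ 1 [ZMOD 3]) (a v : ℕ) (hv : (3 : ℤ) ^ v ∣ m - 1)
    (ha : v < a) :
    VV v (((3 : ℚ_[3]) ^ a)⁻¹ * (∑ k ∈ Finset.range (3 ^ a),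
          (-1) ^ k * (Nat.choose (3 ^ a - 1) k : ℚ_[3]) * (Nat.choose (2 * k) k : ℚ_[3]) /
            (m : ℚ_[3]) ^ k) -
        (-(((m : ℚ_[3]) - 1) / 3))) := by
  have hp : 0 < 3 ^ a := by positivity
  obtain ⟨N, hN⟩ : ∃ N, 3 ^ a = N + 1 := ⟨3 ^ a - 1, by omega⟩
  have hN' : 3 ^ a - 1 = N := by omega
  set μ : ℚ_[3] := (m : ℚ_[3]) with hμ
  set t : ℚ_[3] := μ - 1 with ht
  have ht1 : VV 1 t := by
    have := VV_dvd (k := 1) (n := m - 1) (by simpa using hm.symm.dvd)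
    simpa [ht, hμ] using this
  have htv : VV v t := by
    have := VV_dvd hv
    simpa [ht, hμ] using this
  have ht3 : VV ((v : ℤ) - 1) (t / 3) := by
    have := VV_mul htv (VV_inv_nat (d := 3) (k := 1) (by norm_num) (by simp))
    rw [div_eq_mul_inv]
    exact_mod_cast this
  have h3 : VV 1 (3 : ℚ_[3]) := by simpa using VV_three_pow 1
  have hμu : ‖μ‖ = 1 := norm_unit (y := 1) (by simp) ht1
  have hμ0 : μ ≠ 0 := by intro h; rw [h] at hμu; simp at hμu
  set z : ℚ_[3] := 4 - μ with hz
  have hz1 : VV 1 z := by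
    have := VV_sub h3 ht1
    convert this using 1
    rw [hz, ht]; ring
  -- the sum
  obtain ⟨u, hu, hcb⟩ := cb_unit a (by omega)
  choose! ρ hρ hτ using rho a
  set G : ℚ_[3] := ∑ j ∈ Finset.range (3 ^ a), ff j * ρ j * z ^ j with hG
  have hS : (∑ k ∈ Finset.range (3 ^ a),
          (-1) ^ k * (Nat.choose (3 ^ a - 1) k : ℚ_[3]) * (Nat.choose (2 * k) k : ℚ_[3]) /
            μ ^ k) = (μ ^ N)⁻¹ * (3 ^ a * u * G) := by
    rw [hN', eq_inv_mul_iff_mul_eq₀ (pow_ne_zero _ hμ0), Finset.mul_sum]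
    have e1 : ∀ k ∈ Finset.range (3 ^ a), μ ^ N * ((-1) ^ k * (N.choose k : ℚ_[3]) * ((2 * k).choose k : ℚ_[3]) / μ ^ k)
        = (-1) ^ k * (N.choose k : ℚ_[3]) * ((2 * k).choose k : ℚ_[3]) * μ ^ (N - k) := by
      intro k hk
      rw [hN, Finset.mem_range] at hk
      rw [pow_sub₀ _ hμ0 (by omega)]
      field_simp
    rw [Finset.sum_congr rfl e1, hN, trinom, ← Finset.sum_range_reflect, ← hN, hG, Finset.mul_sum]
    refine Finset.sum_congr rfl fun j hj => ?_
    have hj' := Finset.mem_range.1 hj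
    have e2 : 3 ^ a - 1 - j = N - j := by omega
    have e3 : N - (N - j) = j := by omega
    have h := hτ j hj'
    rw [hcb, hN'] at h
    rw [e2, e3, Nat.choose_symm (by omega), ← Nat.centralBinom_eq_two_mul_choose]
    push_cast at h
    rw [h]
    have : μ - 4 = -1 * z := by rw [hz]; ring
    rw [this, mul_pow]
    have h2 : ((-1 : ℚ_[3]) ^ j) * (-1) ^ j = 1 := by rw [← mul_pow]; simp
    linear_combination 3 ^ a * u * ff j * ρ j * z ^ j * h2
  -- compare G with F
  set F : ℚ_[3] := (PP (3 ^ a)).eval z with hF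
  have hPe : ∀ y, (PP (3 ^ a)).eval y = ∑ j ∈ Finset.range (3 ^ a), ff j * y ^ j := by
    intro y; unfold PP; simp [eval_finsetSum]
  have hGF : VV v (G - F) := by
    rw [hF, hPe, hG, ← Finset.sum_sub_distrib]
    refine VV_sum _ _ _ fun j hj => ?_
    have hj' := Finset.mem_range.1 hj
    have e : ff j * ρ j * z ^ j - ff j * z ^ j = ff j * (ρ j - 1) * z ^ j := by ring
    rw [e]
    refine VV_mono (VV_mul (VV_mul (VV_ff j) (hρ j hj')) (VV_pow hz1 j)) ?_
    rcases Nat.eq_zero_or_pos j with rfl | hj0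
    · simp; omega
    · have := log_bound j hj0
      omega
  -- functional equation
  set w : ℚ_[3] := z * (3 - z) ^ 2 with hw
  set Fw : ℚ_[3] := (PP (3 ^ a)).eval w with hFw
  have hE : VV ((v : ℤ) + 1) (Fw * ((z - 1) * (z - 3)) - 3 * F) := by
    have h1 := EE_eval (3 ^ a) (2 * a) (fun j hj => VV_mono (VV_ff j) (by
      have h1 := log_le_a a j hj
      have h2 : Nat.log 3 (2 * j) ≤ Nat.log 3 (2 * j + 1) := Nat.log_mono_right (by omega)
      push_cast; omega)) z hz1
    have h2 : (EE (3 ^ a)).eval z = Fw * ((z - 1) * (z - 3)) - 3 * F := by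
      unfold EE ww AA
      simp [eval_comp, hFw, hF, hw]
    rw [h2] at h1
    refine VV_mono h1 ?_
    have : ∀ b : ℕ, 3 * (b + 1) ≤ 3 ^ (b + 1) := by
      intro b
      induction b with
      | zero => norm_num
      | succ b ih => rw [pow_succ 3 (b + 1)]; omega
    have h4 := this (a - 1)
    rw [Nat.sub_add_cancel (by omega)] at h4
    have h5 : (3 * a : ℤ) ≤ ((3 ^ a : ℕ) : ℤ) := by exact_mod_cast h4
    push_cast at h5 ⊢
    omega
  have hw3 : VV 3 w := by
    have e : w = z * (t * t) := by rw [hw, hz, ht]; ring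
    rw [e]; exact VV_mul hz1 (VV_mul ht1 ht1)
  have hFw1 : VV 1 (Fw - 1) := by
    rw [hFw, hPe, hN, Finset.sum_range_succ']
    have : ff 0 * w ^ 0 = 1 := by simp [ff]
    rw [this, add_sub_cancel_right]
    refine VV_sum _ _ _ fun j _ => ?_
    refine VV_mono (VV_mul (VV_ff (j + 1)) (VV_pow hw3 (j + 1))) ?_
    have := log_bound (j + 1) (by omega)
    push_cast
    omega
  have hFt : VV v (F - t / 3) := by
    have h30 : (3 : ℚ_[3]) ≠ 0 := by norm_num
    have e : F - t / 3 = (t / 3) * ((-2 : ℤ) * (Fw - 1) + t * (Fw - 1) + t - 3)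
        - (Fw * ((z - 1) * (z - 3)) - 3 * F) * ((3 : ℕ) : ℚ_[3])⁻¹ := by
      have : z = 3 - t := by rw [hz, ht]; ring
      rw [this]
      push_cast
      field_simp
      ring
    rw [e]
    have h4 := VV_mul (VV_int (-2)) hFw1
    have h5 := VV_mono (l := 1) (VV_mul ht1 hFw1) (by omega)
    have h6 := VV_sub (VV_add (VV_add h4 h5) ht1) h3
    have h7 := VV_mul ht3 h6
    have h8 := VV_mul hE (VV_inv_nat (d := 3) (k := 1) (by norm_num) (by simp))
    exact VV_sub (VV_mono h7 (by omega)) (VV_mono h8 (by push_cast; omega))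
  have hGt : VV v (G - t / 3) := by
    have := VV_add hGF hFt
    convert this using 1; ring
  -- the unit
  have hμN : VV 1 ((μ ^ N)⁻¹ - 1) := by
    have h1 : VV 1 (μ ^ N - 1) := by
      have hd : (3 : ℤ) ^ 1 ∣ m ^ N - 1 := by
        have := (hm.pow N).symm.dvd
        simpa using this
      have := VV_dvd hd
      simpa [hμ] using this
    have h2 : VV 0 (μ ^ N)⁻¹ := VV_inv_unit (by rw [norm_pow, hμu, one_pow])
    have h4 := VV_neg (VV_mul h2 h1)
    rw [zero_add] at h4
    convert h4 using 1
    have : μ ^ N ≠ 0 := pow_ne_zero _ hμ0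
    field_simp
    ring
  have hMN0 : VV 0 ((μ ^ N)⁻¹) := VV_inv_unit (by rw [norm_pow, hμu, one_pow])
  have hu0 : VV 0 u := by
    have := VV_sub (VV_mono (l := 0) hu (by omega)) VV_one
    simpa using this
  rw [hS]
  have hn0 : (3 : ℚ_[3]) ^ a ≠ 0 := pow_ne_zero _ (by norm_num)
  have e : ((3 : ℚ_[3]) ^ a)⁻¹ * ((μ ^ N)⁻¹ * (3 ^ a * u * G)) - -(t / 3)
      = (μ ^ N)⁻¹ * u * (G - t / 3) + (t / 3) * ((μ ^ N)⁻¹ * (u + 1) - ((μ ^ N)⁻¹ - 1)) := by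
    generalize (μ ^ N)⁻¹ = M
    field_simp
    ring
  rw [e]
  have h4 := VV_mul (VV_mul hMN0 hu0) hGt
  have h5 := VV_mul hMN0 hu
  have h6 := VV_mul ht3 (VV_sub (VV_mono h5 (by omega)) hμN)
  exact VV_add (VV_mono h4 (by omega)) (VV_mono h6 (by omega))


/-- Sun's conjecture (ii), second part: for `m ≡ 1 (mod 3)`, `m ≠ 1`, and
`a > ν₃(m−1)`, one has
`(1/3^a)·∑_{k<3^a} (−1)^k C(3^a−1,k) C(2k,k)/m^k ≡ −(m−1)/3 (mod 3^{ν₃(m−1)})`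
as 3-adic numbers. -/
theorem stmt_6 (m : ℤ) (hm : m ≡ 1 [ZMOD 3]) (hm1 : m ≠ 1) (a : ℕ)
    (ha : padicValInt 3 (m - 1) < a) :
    ‖((3 : ℚ_[3]) ^ a)⁻¹ * (∑ k ∈ Finset.range (3 ^ a),
          (-1) ^ k * (Nat.choose (3 ^ a - 1) k : ℚ_[3]) * (Nat.choose (2 * k) k : ℚ_[3]) /
            (m : ℚ_[3]) ^ k) -
        (-(((m : ℚ_[3]) - 1) / 3))‖ ≤ (3 : ℝ) ^ (-(padicValInt 3 (m - 1) : ℤ)) := by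
  exact stmt_6_aux m hm a _ (by exact_mod_cast padicValInt_dvd (p := 3) (m - 1)) ha
end

section
/- For any integer a ≥ 2, (1/3^a)·∑_{k=0}^{3^a−1} (−1)^k·C(3^a−1,k)·C(2k,k) ≡ −3^{a−1} (mod 3^a). -/
open Polynomial Finset

lemma aux_split {R : Type*} [AddCommMonoid R] (f : ℕ → R) (N : ℕ) :
    ∑ k ∈ range (3 * N), f k = ∑ k ∈ range N, (f (3 * k) + f (3 * k + 1) + f (3 * k + 2)) := by
  induction N with
  | zero => simp
  | succ N ih =>
    rw [show 3 * (N + 1) = 3 * N + 1 + 1 + 1 by ring, sum_range_succ, sum_range_succ,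
      sum_range_succ, ih, sum_range_succ]
    simp only [add_assoc]

lemma aux_coeff_lin (a : ℂ) (M k : ℕ) :
    ((1 + C a * X : ℂ[X]) ^ M).coeff k = (M.choose k : ℂ) * a ^ k := by
  have : (1 + C a * X : ℂ[X]) ^ M = ((1 + X : ℂ[X]) ^ M).comp (C a * X) := by simp
  rw [this, comp_C_mul_X_coeff, coeff_one_add_X_pow]

lemma aux_tri (M : ℕ) (hM : Even M) (w : ℂ) (hw : w ^ 2 + w + 1 = 0) :
    (∑ k ∈ range (M + 1), (-1) ^ k * (M.choose k : ℂ) * ((2 * k).choose k : ℂ)) =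
      ∑ k ∈ range (M + 1), (M.choose k : ℂ) ^ 2 * (w ^ k * (w ^ 2) ^ (M - k)) := by
  have h1 : (((1 + X : ℂ[X]) ^ 2 + (- X)) ^ M).coeff M =
      ∑ k ∈ range (M + 1), (-1) ^ k * (M.choose k : ℂ) * ((2 * k).choose k : ℂ) := by
    rw [add_pow, finsetSum_coeff]
    apply sum_congr rfl
    intro k hk
    have hk' : k ≤ M := by simp at hk; omega
    have e : ((1 + X : ℂ[X]) ^ 2) ^ k * (-X) ^ (M - k) * (M.choose k : ℂ[X]) =
        C ((-1) ^ (M - k) * (M.choose k : ℂ)) * ((1 + X) ^ (2 * k) * X ^ (M - k)) := by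
      rw [neg_pow]; simp [pow_mul]; ring
    rw [e, coeff_C_mul, coeff_mul_X_pow', if_pos (by omega), coeff_one_add_X_pow,
      show M - (M - k) = k by omega]
    have : (-1 : ℂ) ^ (M - k) = (-1) ^ k := by
      rcases Nat.even_or_odd k with h | h
      · rw [h.neg_one_pow, (Even.neg_one_pow ((Nat.even_sub hk').2 (by tauto)))]
      · rw [h.neg_one_pow, Odd.neg_one_pow]
        rw [Nat.odd_sub hk']
        rw [← Nat.not_even_iff_odd] at h ⊢
        tauto
    rw [this]
  have h2 : (1 + X : ℂ[X]) ^ 2 + (- X) = (1 + C (-w) * X) * (1 + C (-w ^ 2) * X) := by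
    have e1 : w ^ 2 + w = -1 := by linear_combination hw
    have e2 : w * w ^ 2 = 1 := by linear_combination (w - 1) * hw
    have f1 : (C w : ℂ[X]) ^ 2 + C w = -1 := by
      rw [← C_pow, ← C_add, e1]; simp
    have f2 : (C w : ℂ[X]) * C w ^ 2 = 1 := by
      rw [← C_pow, ← C_mul, e2]; simp
    simp only [C_neg, C_pow]
    linear_combination X * f1 - X ^ 2 * f2
  rw [← h1, h2, mul_pow, coeff_mul, Nat.sum_antidiagonal_eq_sum_range_succ_mk]
  apply sum_congr rfl
  intro k hk
  have hk' : k ≤ M := by simp at hk; omega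
  simp only [aux_coeff_lin]
  rw [Nat.choose_symm hk', neg_pow w, neg_pow (w ^ 2)]
  have : (-1 : ℂ) ^ k * (-1) ^ (M - k) = 1 := by
    rw [← pow_add, Nat.add_sub_cancel' hk', hM.neg_one_pow]
  linear_combination ((M.choose k : ℂ) ^ 2 * (w ^ k * (w ^ 2) ^ (M - k))) * this

lemma aux_twoS (m : ℕ) (hm : Even m) :
    2 * (∑ k ∈ range (3 * (m + 1)),
      (-1) ^ k * ((3 * m + 2).choose k : ℤ) * ((2 * k).choose k : ℤ)) =
    ∑ k ∈ range (m + 1), (2 * ((3 * m + 2).choose (3 * k + 1) : ℤ) ^ 2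
      - ((3 * m + 2).choose (3 * k) : ℤ) ^ 2 - ((3 * m + 2).choose (3 * k + 2) : ℤ) ^ 2) := by
  obtain ⟨w, hw⟩ : ∃ w : ℂ, w ^ 2 + w + 1 = 0 := by
    have := (Complex.isPrimitiveRoot_exp 3 (by norm_num)).geom_sum_eq_zero (by norm_num)
    simp only [sum_range_succ, range_zero, sum_empty] at this
    exact ⟨_, by linear_combination this⟩
  have hE : Even (3 * m + 2) := by
    obtain ⟨r, rfl⟩ := hm
    exact ⟨3 * r + 1, by ring⟩
  have w3 : w ^ 3 = 1 := by linear_combination (w - 1) * hw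
  have hw2 : (w ^ 2) ^ 2 + w ^ 2 + 1 = 0 := by linear_combination (w ^ 2 - w + 1) * hw
  have key : ∀ z : ℂ, z ^ 2 + z + 1 = 0 → ∑ k ∈ range (3 * (m + 1)),
      (-1) ^ k * ((3 * m + 2).choose k : ℂ) * ((2 * k).choose k : ℂ) =
      ∑ k ∈ range (m + 1), (((3 * m + 2).choose (3 * k + 1) : ℂ) ^ 2
      + z * ((3 * m + 2).choose (3 * k) : ℂ) ^ 2
      + z ^ 2 * ((3 * m + 2).choose (3 * k + 2) : ℂ) ^ 2) := by
    intro z hz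
    have z3 : z ^ 3 = 1 := by linear_combination (z - 1) * hz
    have := aux_tri (3 * m + 2) hE z hz
    rw [show 3 * m + 2 + 1 = 3 * (m + 1) by ring] at this
    rw [this, aux_split]
    apply sum_congr rfl
    intro k hk
    have hk' : k ≤ m := by simp at hk; omega
    obtain ⟨d, rfl⟩ := Nat.exists_eq_add_of_le hk'
    rw [show 3 * (k + d) + 2 - 3 * k = 3 * d + 2 by omega,
      show 3 * (k + d) + 2 - (3 * k + 1) = 3 * d + 1 by omega,
      show 3 * (k + d) + 2 - (3 * k + 2) = 3 * d by omega]
    have p : ∀ j, (z ^ 2) ^ (3 * j) = 1 := by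
      intro j; rw [← pow_mul, show 2 * (3 * j) = 3 * (2 * j) by ring, pow_mul, z3, one_pow]
    have q : ∀ j, z ^ (3 * j) = 1 := by
      intro j; rw [pow_mul, z3, one_pow]
    simp only [pow_add, p, q]
    linear_combination ((z * ((3 * (k + d) + 2).choose (3 * k) : ℂ) ^ 2) +
      ((3 * (k + d) + 2).choose (3 * k + 1) : ℂ) ^ 2) * z3
  have k1 := key w hw
  have k2 := key (w ^ 2) hw2
  have : (2 : ℂ) * (∑ k ∈ range (3 * (m + 1)),
      (-1) ^ k * ((3 * m + 2).choose k : ℂ) * ((2 * k).choose k : ℂ)) =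
    ∑ k ∈ range (m + 1), (2 * ((3 * m + 2).choose (3 * k + 1) : ℂ) ^ 2
      - ((3 * m + 2).choose (3 * k) : ℂ) ^ 2 - ((3 * m + 2).choose (3 * k + 2) : ℂ) ^ 2) := by
    rw [two_mul]
    nth_rewrite 1 [k1]
    rw [k2, ← sum_add_distrib]
    apply sum_congr rfl
    intro k _
    linear_combination (((3 * m + 2).choose (3 * k) : ℂ) ^ 2 +
      ((3 * m + 2).choose (3 * k + 2) : ℂ) ^ 2) * hw
      + w * ((3 * m + 2).choose (3 * k + 2) : ℂ) ^ 2 * w3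
  exact_mod_cast this

lemma aux_poly {R : Type*} [CommRing R] (b m : ℕ) (hR : (3 : R) ^ (b + 1) = 0)
    (hm : m + 1 = 3 ^ b) :
    ((1 + X : R[X])) ^ (3 * m + 2) =
      expand R 3 ((1 + X) ^ m) * (1 - X + X ^ 2) := by
  have h0 : ((3 : ℕ) : R[X]) ∣ (1 + X) ^ 3 - (1 + X ^ 3) := ⟨X + X ^ 2, by push_cast; ring⟩
  have h1 := dvd_sub_pow_of_dvd_sub h0 b
  rw [← hm] at h1
  have hz : (((3 : ℕ) : R[X]) ^ (b + 1)) = 0 := by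
    have := congrArg (C : R → R[X]) hR
    rw [C_pow, C_0] at this
    exact this
  rw [hz, zero_dvd_iff, sub_eq_zero] at h1
  have hmon : (1 + X : R[X]).Monic := by
    rw [add_comm]; exact monic_X_add_C 1
  apply hmon.isRegular.left
  have he : expand R 3 ((1 + X) ^ m) = (1 + X ^ 3) ^ m := by
    rw [map_pow, map_add, map_one, expand_X]
  change (1 + X) * _ = (1 + X) * _
  rw [he, show (1 + X : R[X]) * ((1 + X ^ 3) ^ m * (1 - X + X ^ 2)) =
    (1 + X ^ 3) ^ (m + 1) by ring, ← h1, ← pow_mul]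
  ring

lemma aux_choose' {R : Type*} [CommRing R] (b m : ℕ) (hR : (3 : R) ^ (b + 1) = 0)
    (hm : m + 1 = 3 ^ b) (k : ℕ) :
    (((3 * m + 2).choose (3 * k) : ℕ) : R) = (m.choose k : ℕ) ∧
    (((3 * m + 2).choose (3 * k + 1) : ℕ) : R) = -(m.choose k : ℕ) ∧
    (((3 * m + 2).choose (3 * k + 2) : ℕ) : R) = (m.choose k : ℕ) := by
  have h := aux_poly b m hR hm
  rw [show ∀ P : R[X], P * (1 - X + X ^ 2) = P - P * X ^ 1 + P * X ^ 2 by intro P; ring] at h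
  have hc := fun j => congrArg (fun p => p.coeff j) h
  simp only [coeff_one_add_X_pow, coeff_add, coeff_sub, coeff_mul_X_pow',
    coeff_expand (show 0 < 3 by norm_num)] at hc
  refine ⟨?_, ?_, ?_⟩
  · rw [hc]
    rcases k with _ | k
    · simp
    · have : ¬ 3 ∣ 3 * (k + 1) - 1 := by omega
      have : ¬ 3 ∣ 3 * (k + 1) - 2 := by omega
      simp [*]
  · rw [hc]
    have : ¬ 3 ∣ 3 * k + 1 := by omega
    have : ¬ 3 ∣ 3 * k + 1 - 2 ∨ k = 0 := by omega
    rcases this with h | h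
    · have h' : ¬ 3 ∣ 3 * k - 1 ∨ ¬ 1 ≤ 3 * k := by omega
      rcases h' with h' | h' <;> simp [*]
    · simp [*]
  · rw [hc]
    have : ¬ 3 ∣ 3 * k + 1 := by omega
    have : ¬ 3 ∣ 3 * k + 2 := by omega
    simp [*]

lemma aux_choose (b m : ℕ) (hm : m + 1 = 3 ^ b) (k : ℕ) :
    (((3 * m + 2).choose (3 * k) : ℕ) : ZMod (3 ^ (b + 1))) = (m.choose k : ℕ) ∧
    (((3 * m + 2).choose (3 * k + 1) : ℕ) : ZMod (3 ^ (b + 1))) = -(m.choose k : ℕ) ∧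
    (((3 * m + 2).choose (3 * k + 2) : ℕ) : ZMod (3 ^ (b + 1))) = (m.choose k : ℕ) := by
  apply aux_choose' b m _ hm k
  have := ZMod.natCast_self (3 ^ (b + 1))
  rw [Nat.cast_pow] at this
  exact this

lemma aux_shift (P : ℤ[X]) (r : ℤ) : ∃ Q : ℤ[X], ∀ k : ℤ,
    P.eval (3 * k + r) = P.eval r + 3 * Q.eval k := by
  obtain ⟨Q, hQ⟩ := X_sub_C_dvd_sub_C_eval (a := r) (p := P)
  refine ⟨X * Q.comp (3 * X + C r), fun k => ?_⟩
  have := congrArg (eval (3 * k + r)) hQ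
  simp at this
  simp
  linear_combination this

lemma aux_div (b : ℕ) : ∀ (m : ℕ), m + 1 = 3 ^ b → ∀ (c : ℤ) (P : ℤ[X]),
    (3 : ℤ) ^ b ∣ ∑ k ∈ range (m + 1), (m.choose k : ℤ) ^ 2 * (c + 3 * P.eval (k : ℤ)) := by
  induction b with
  | zero => intro m _ c P; simp
  | succ b ih =>
    intro m' hm' c P
    obtain ⟨m, hm⟩ : ∃ m, m + 1 = 3 ^ b := ⟨3 ^ b - 1, Nat.sub_add_cancel (Nat.one_le_pow _ _ (by norm_num))⟩
    obtain rfl : m' = 3 * m + 2 := by rw [pow_succ] at hm'; omega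
    obtain ⟨Q0, h0⟩ := aux_shift P 0
    obtain ⟨Q1, h1⟩ := aux_shift P 1
    obtain ⟨Q2, h2⟩ := aux_shift P 2
    obtain ⟨t, ht⟩ := ih m hm (c + P.eval 0 + P.eval 1 + P.eval 2) (Q0 + Q1 + Q2)
    have e : ((∑ k ∈ range (3 * m + 2 + 1), ((3 * m + 2).choose k : ℤ) ^ 2 * (c + 3 * P.eval (k : ℤ)) : ℤ) : ZMod (3 ^ (b + 1)))
      = ((3 * ∑ k ∈ range (m + 1), (m.choose k : ℤ) ^ 2 * ((c + P.eval 0 + P.eval 1 + P.eval 2) + 3 * (Q0 + Q1 + Q2).eval (k : ℤ)) : ℤ) : ZMod (3 ^ (b + 1))) := by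
      rw [show 3 * m + 2 + 1 = 3 * (m + 1) by ring, aux_split, mul_sum, Int.cast_sum, Int.cast_sum]
      apply sum_congr rfl
      intro k _
      obtain ⟨c0, c1, c2⟩ := aux_choose b m hm k
      have g0 := h0 k
      rw [add_zero] at g0
      push_cast
      rw [c0, c1, c2, g0, h1, h2]
      simp
      ring
    rw [ht] at e
    have z : ((3 * (3 ^ b * t) : ℤ) : ZMod (3 ^ (b + 1))) = 0 := by
      rw [ZMod.intCast_zmod_eq_zero_iff_dvd]
      exact ⟨t, by push_cast; ring⟩
    rw [z, ZMod.intCast_zmod_eq_zero_iff_dvd] at e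
    exact_mod_cast e

lemma aux_cb3 (b : ℕ) : ((2 * 3 ^ b).choose (3 ^ b)) ≡ 2 [MOD 3] := by
  induction b with
  | zero => decide
  | succ b ih =>
    have : Fact (Nat.Prime 3) := ⟨by norm_num⟩
    have := Choose.choose_modEq_choose_mod_mul_choose_div_nat (n := 2 * 3 ^ (b + 1)) (k := 3 ^ (b + 1)) (p := 3)
    rw [show 2 * 3 ^ (b + 1) = 3 * (2 * 3 ^ b) by ring, show 3 ^ (b + 1) = 3 * 3 ^ b by ring] at this ⊢
    simp at this
    exact this.trans ih

-- sum of squares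
lemma aux_cb (b m : ℕ) (hb : 1 ≤ b) (hm : m + 1 = 3 ^ b) :
    ∃ t : ℤ, ∑ k ∈ range (m + 1), (m.choose k : ℤ) ^ 2 = (3 ^ b) * (3 * t - 1) := by
  have hs : ∑ k ∈ range (m + 1), (m.choose k : ℤ) ^ 2 = (m.centralBinom : ℤ) := by
    have := Nat.sum_range_choose_sq m
    rw [Nat.centralBinom]
    exact_mod_cast this
  obtain ⟨q, hq⟩ := aux_div b m hm 1 0
  simp at hq
  have h1 := Nat.succ_mul_centralBinom_succ m
  have h2 := aux_cb3 b
  rw [← hm] at h2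
  change (m + 1).centralBinom ≡ 2 [MOD 3] at h2
  rw [hs] at hq ⊢
  rw [hq]
  have h3 : ((m + 1 : ℕ) : ℤ) * (m + 1).centralBinom = 2 * (2 * m + 1) * m.centralBinom := by
    exact_mod_cast h1
  have hmz : ((m + 1 : ℕ) : ℤ) = 3 ^ b := by exact_mod_cast hm
  rw [hq, hmz] at h3
  have h4 : ((m + 1).centralBinom : ℤ) = 2 * (2 * m + 1) * q := by
    have : (3 : ℤ) ^ b ≠ 0 := by positivity
    apply mul_left_cancel₀ this
    linear_combination h3
  obtain ⟨c, hc⟩ : ∃ c : ℤ, (m : ℤ) + 1 = 3 * c := by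
    obtain ⟨d, rfl⟩ := Nat.exists_eq_add_of_le' hb
    exact ⟨3 ^ d, by have : ((m + 1 : ℕ) : ℤ) = _ := congrArg _ hm
                     push_cast at this; rw [this]; ring⟩
  have h5 : ((m + 1).centralBinom : ℤ) % 3 = 2 := by
    have : (m + 1).centralBinom % 3 = 2 := h2
    omega
  have h6 : ((m + 1).centralBinom : ℤ) = 3 * (4 * c * q) - 2 * q := by
    rw [h4]; linear_combination 4 * q * hc
  exact ⟨(q + 1) / 3, by congr 1; omega⟩

lemma aux_step (n u C0 C1 C2 c v : ℤ) (h01 : C0 * (n - u) = C1 * u)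
    (h12 : C1 * (n - u - 1) = C2 * (u + 1))
    (h0 : n ∣ C0 ^ 2 - c ^ 2) (h1 : n ∣ C1 ^ 2 - c ^ 2) (h2 : n ∣ C2 ^ 2 - c ^ 2)
    (hv : n ∣ v * (u * (u + 1)) - 1) :
    n ^ 2 ∣ (2 * C1 ^ 2 - C0 ^ 2 - C2 ^ 2) + 2 * n * c ^ 2 * v := by
  have cop : IsCoprime (n ^ 2) (u * (u + 1)) := by
    obtain ⟨t, ht⟩ := hv
    exact IsCoprime.pow_left ⟨-t, v, by linear_combination ht⟩
  have copu := cop.of_mul_right_left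
  have copv := cop.of_mul_right_right
  have a1 : n ^ 2 ∣ (C1 ^ 2 - C0 ^ 2) * u + 2 * n * c ^ 2 := by
    apply copu.dvd_of_dvd_mul_left
    obtain ⟨x, hx⟩ := h0
    exact ⟨C0 ^ 2 - 2 * u * x, by
      linear_combination (-C1 * u - C0 * (n - u)) * h01 - 2 * n * u * hx⟩
  have a2 : n ^ 2 ∣ (C1 ^ 2 - C2 ^ 2) * (u + 1) - 2 * n * c ^ 2 := by
    apply copv.dvd_of_dvd_mul_left
    obtain ⟨x, hx⟩ := h1
    exact ⟨- C1 ^ 2 + 2 * (u + 1) * x, by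
      linear_combination (C2 * (u + 1) + C1 * (n - u - 1)) * h12 + 2 * n * (u + 1) * hx⟩
  obtain ⟨x, hx⟩ := a1
  obtain ⟨y, hy⟩ := a2
  obtain ⟨p, hp⟩ := h0
  obtain ⟨q, hq⟩ := h1
  obtain ⟨r, hr⟩ := h2
  obtain ⟨s, hs⟩ := hv
  exact ⟨v * (x * (u + 1) + y * u) - (2 * q - p - r) * s, by
    linear_combination v * (u + 1) * hx + v * u * hy - (2 * C1 ^ 2 - C0 ^ 2 - C2 ^ 2) * hs
      - n * s * (2 * hq - hp - hr)⟩

theorem stmt_7 (a : ℕ) (ha : 2 ≤ a) :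
    (∑ k ∈ Finset.range (3 ^ a),
        (-1) ^ k * (Nat.choose (3 ^ a - 1) k : ℤ) * (Nat.choose (2 * k) k : ℤ)) ≡
      -3 ^ (2 * a - 1) [ZMOD 3 ^ (2 * a)] := by
  obtain ⟨b, rfl⟩ : ∃ b, a = b + 1 := ⟨a - 1, by omega⟩
  have hb : 1 ≤ b := by omega
  obtain ⟨m, hm⟩ : ∃ m, m + 1 = 3 ^ b :=
    ⟨3 ^ b - 1, Nat.sub_add_cancel (Nat.one_le_pow _ _ (by norm_num))⟩
  have hme : Even m := by
    have : Odd (3 ^ b) := Odd.pow (by decide)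
    rw [← hm] at this
    simpa [Nat.odd_add_one] using this
  have hmz : (m : ℤ) + 1 = 3 ^ b := by exact_mod_cast hm
  have hS := aux_twoS m hme
  rw [show 3 ^ (b + 1) = 3 * (m + 1) by rw [hm]; ring,
    show 3 * (m + 1) - 1 = 3 * m + 2 by omega]
  set S := (∑ k ∈ range (3 * (m + 1)),
      (-1) ^ k * ((3 * m + 2).choose k : ℤ) * ((2 * k).choose k : ℤ)) with hSdef
  -- the exponent inverting units
  set e := 2 * 3 ^ b - 1 with he
  have hpos : 0 < 3 ^ b := pow_pos (by norm_num) b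
  have he1 : e + 1 = 2 * 3 ^ b := by omega
  have hinv : ∀ x : ℤ, (3 : ℤ) ^ (b + 1) ∣ (2 + 9 * x) ^ e * (2 + 9 * x) - 1 := by
    intro x
    rw [← pow_succ, he1]
    have h0 : ((3 : ℕ) : ℤ) ∣ (2 + 9 * x) ^ 2 - 1 := ⟨1 + 12 * x + 27 * x ^ 2, by push_cast; ring⟩
    have := dvd_sub_pow_of_dvd_sub h0 b
    rw [one_pow, ← pow_mul] at this
    exact_mod_cast this
  obtain ⟨Q, hQ⟩ : ∃ Q : ℤ[X], ∀ k : ℤ, (2 + 9 * (k * (k + 1))) ^ e = 2 ^ e + 9 * Q.eval k := by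
    obtain ⟨Q, hQ⟩ := sub_dvd_pow_sub_pow (2 + 9 * (X * (X + 1)) : ℤ[X]) 2 e
    refine ⟨X * (X + 1) * Q, fun k => ?_⟩
    have := congrArg (eval k) hQ
    simp at this
    simp
    linear_combination this
  have hterm : ∀ k ∈ range (m + 1), ((3 : ℤ) ^ (b + 1)) ^ 2 ∣
      (2 * ((3 * m + 2).choose (3 * k + 1) : ℤ) ^ 2
      - ((3 * m + 2).choose (3 * k) : ℤ) ^ 2 - ((3 * m + 2).choose (3 * k + 2) : ℤ) ^ 2)
      + 2 * 3 ^ (b + 1) * (m.choose k : ℤ) ^ 2 * (2 ^ e + 9 * Q.eval (k : ℤ)) := by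
    intro k hk
    have hk' : k ≤ m := by simp at hk; omega
    obtain ⟨c0, c1, c2⟩ := aux_choose b m hm k
    have conv : ∀ x y : ℤ, (x : ZMod (3 ^ (b + 1))) = y → (3 : ℤ) ^ (b + 1) ∣ x - y := by
      intro x y h
      have := (ZMod.intCast_zmod_eq_zero_iff_dvd (x - y) (3 ^ (b + 1))).1 (by simp [h])
      exact_mod_cast this
    have hn : (3 : ℤ) ^ (b + 1) = 3 * m + 3 := by rw [pow_succ, ← hmz]; ring
    apply aux_step _ (3 * k + 1)
    · have := Nat.choose_succ_right_eq (3 * m + 2) (3 * k)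
      zify [show 3 * k ≤ 3 * m + 2 by omega] at this
      rw [hn]
      linear_combination -this
    · have := Nat.choose_succ_right_eq (3 * m + 2) (3 * k + 1)
      zify [show 3 * k + 1 ≤ 3 * m + 2 by omega] at this
      rw [hn]
      linear_combination -this
    · apply conv; push_cast; rw [c0]
    · apply conv; push_cast; rw [c1]; ring
    · apply conv; push_cast; rw [c2]
    · rw [← hQ]
      have := hinv ((k : ℤ) * (k + 1))
      rw [show ((3 * (k : ℤ) + 1) * (3 * k + 1 + 1)) = 2 + 9 * (k * (k + 1)) by ring]
      exact this
  have hsum := dvd_sum hterm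
  rw [sum_add_distrib, ← hS] at hsum
  obtain ⟨x, hx⟩ := hsum
  obtain ⟨t, ht⟩ := aux_cb b m hb hm
  obtain ⟨y, hy⟩ := aux_div b m hm 0 Q
  obtain ⟨z, hz⟩ : ∃ z : ℤ, (2 : ℤ) ^ e = 3 * z - 1 := by
    have := hinv 0
    have h3 : (3 : ℤ) ∣ 3 ^ (b + 1) := dvd_pow_self _ (by omega)
    obtain ⟨z, hz⟩ := h3.trans this
    simp at hz
    exact ⟨(2 ^ e + 1) / 3, by omega⟩
  have hsplit : ∑ k ∈ range (m + 1), 2 * (3 : ℤ) ^ (b + 1) * (m.choose k : ℤ) ^ 2 * (2 ^ e + 9 * Q.eval (k : ℤ))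
      = 2 * 3 ^ (b + 1) * (2 ^ e * (3 ^ b * (3 * t - 1)) + 3 * (3 ^ b * y)) := by
    rw [← ht, ← hy, mul_sum, mul_sum, ← sum_add_distrib, mul_sum]
    apply sum_congr rfl
    intro k _
    ring
  rw [hsplit, hz] at hx
  apply Int.ModEq.symm
  rw [Int.modEq_iff_dvd, show 2 * (b + 1) - 1 = 2 * b + 1 by omega]
  have c2 : IsCoprime ((3 : ℤ) ^ (2 * (b + 1))) 2 := IsCoprime.pow_left ⟨1, -1, by norm_num⟩
  apply c2.dvd_of_dvd_mul_left
  refine ⟨x - 2 * (3 * z * t - z - t + y), ?_⟩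
  have p1 : (3 : ℤ) ^ (2 * (b + 1)) = 9 * (3 ^ b) ^ 2 := by ring
  have p2 : (3 : ℤ) ^ (2 * b + 1) = 3 * (3 ^ b) ^ 2 := by ring
  have p3 : (3 : ℤ) ^ (b + 1) = 3 * 3 ^ b := by ring
  rw [p3] at hx
  rw [p1, p2]
  linear_combination hx
end

section
/- For every positive integer n, the integer ∑_{k=0}^{n-1} (−1)^k·C(n−1,k)·C(2k,k) is divisible by 3^{2·ν₃(n)−1} (when ν₃(n) ≥ 1; the statement is trivial when ν₃(n) = 0). -/
open PowerSeries in
lemma aux_coeff (c K L : ℕ) (G : PowerSeries ℤ) :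
    coeff L ((1 - (X : PowerSeries ℤ) ^ c) ^ K * G) =
      ∑ j ∈ Finset.range (K + 1), (-1) ^ j * (K.choose j : ℤ) *
        (if c * j ≤ L then coeff (L - c * j) G else 0) := by
  have h : (1 - (X : PowerSeries ℤ) ^ c) ^ K =
      ∑ j ∈ Finset.range (K + 1), C ((-1) ^ j * (K.choose j : ℤ)) * X ^ (c * j) := by
    rw [sub_eq_neg_add, add_pow]
    refine Finset.sum_congr rfl fun j _ => ?_
    rw [neg_pow, pow_mul]
    simp
    ring
  rw [h, Finset.sum_mul, map_sum]
  refine Finset.sum_congr rfl fun j _ => ?_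
  rw [mul_assoc, coeff_C_mul, coeff_X_pow_mul']

lemma aux_restrict (f g : ℕ → ℤ) (P : ℕ → Prop) [DecidablePred P] (A B : ℕ) (hBA : B ≤ A)
    (hP : ∀ j, P j ↔ j < B) :
    ∑ j ∈ Finset.range A, f j * (if P j then g j else 0) =
      ∑ j ∈ Finset.range B, f j * g j := by
  symm
  rw [← Finset.sum_subset (Finset.range_mono hBA)]
  · refine Finset.sum_congr rfl fun j hj => ?_
    rw [if_pos ((hP j).2 (Finset.mem_range.1 hj))]
  · intro j _ hj
    rw [if_neg (fun h => hj (Finset.mem_range.2 ((hP j).1 h))), mul_zero]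

open PowerSeries in
lemma aux_conv (p e L : ℕ) (hL : L ≤ p + e) :
    ∑ j ∈ Finset.range (L + 1), (-1) ^ j * ((p + 1 + e).choose j : ℤ) *
      ((p + (L - j)).choose p : ℤ) = (-1) ^ L * (e.choose L : ℤ) := by
  have h1 := aux_coeff 1 (p + 1 + e) L (mk fun n => ((p + n).choose p : ℤ))
  rw [aux_restrict _ (fun j => coeff (L - 1 * j) (mk fun n => ((p + n).choose p : ℤ)))
    _ _ (L + 1) (by omega) (by intro j; omega)] at h1
  simp only [one_mul, coeff_mk, pow_one] at h1
  rw [← h1]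
  have h2 := mk_add_choose_mul_one_sub_pow_eq_one ℤ p
  have h3 : (1 - (X : PowerSeries ℤ)) ^ (p + 1 + e) * (mk fun n => ((p + n).choose p : ℤ))
      = (1 - (X : PowerSeries ℤ) ^ 1) ^ e * 1 := by
    rw [pow_one, pow_add, mul_one]
    linear_combination (1 - (X : PowerSeries ℤ)) ^ e * h2
  rw [h3, aux_coeff]
  have h4 : ∀ j ∈ Finset.range (e + 1), (-1) ^ j * (e.choose j : ℤ) *
        (if 1 * j ≤ L then coeff (L - 1 * j) (1 : PowerSeries ℤ) else 0) =
        if j = L then (-1) ^ L * (e.choose L : ℤ) else 0 := by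
    intro j _
    rw [coeff_one]
    rcases lt_trichotomy j L with h | h | h
    · rw [if_pos (by omega), if_neg (by omega), if_neg (by omega), mul_zero]
    · subst h; simp
    · rw [if_neg (by omega), if_neg (by omega), mul_zero]
  rw [Finset.sum_congr rfl h4, Finset.sum_ite_eq']
  split_ifs with h
  · rfl
  · rw [Nat.choose_eq_zero_of_lt (by simpa [Nat.lt_succ_iff] using h)]; simp

open Polynomial in
lemma aux_tri_s8 (m : ℕ) :
    ∑ k ∈ Finset.range (m + 1), (-1) ^ k * (m.choose k : ℤ) * ((2 * k).choose k : ℤ) =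
      (-1) ^ m * (((1 + X + X ^ 2 : ℤ[X])) ^ m).coeff m := by
  have h : (-1) ^ m * ((1 + X + X ^ 2 : ℤ[X])) ^ m =
      ∑ k ∈ Finset.range (m + 1), C ((-1) ^ k * (m.choose k : ℤ)) *
        ((1 + X) ^ (2 * k) * X ^ (m - k)) := by
    rw [← mul_pow, show (-1 * (1 + X + X ^ 2) : ℤ[X]) = -(1 + X) ^ 2 + X by ring, add_pow]
    refine Finset.sum_congr rfl fun j _ => ?_
    rw [neg_pow, pow_mul]
    simp
    ring
  have h' := congrArg (fun P => P.coeff m) h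
  have e : ((-1) ^ m : ℤ[X]) = C ((-1) ^ m) := by simp
  simp only [e, coeff_C_mul, finsetSum_coeff] at h'
  rw [h']
  refine Finset.sum_congr rfl fun k hk => ?_
  have hk' := Finset.mem_range.1 hk
  rw [coeff_mul_X_pow', if_pos (by omega), show m - (m - k) = k by omega, coeff_one_add_X_pow]

open PowerSeries in
lemma aux_tri2 (N : ℕ) (hN : 0 < N) :
    (((1 + Polynomial.X + Polynomial.X ^ 2 : Polynomial ℤ)) ^ (3 * N - 1)).coeff (3 * N - 1) =
      ∑ j ∈ Finset.range N, (-1) ^ j * ((3 * N - 1).choose j : ℤ) *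
        ((6 * N - 3 - 3 * j).choose (3 * N - 2) : ℤ) := by
  rw [← Polynomial.coeff_coe]
  have h2 := mk_add_choose_mul_one_sub_pow_eq_one ℤ (3 * N - 2)
  rw [show 3 * N - 2 + 1 = 3 * N - 1 by omega] at h2
  have h3 : (((1 + Polynomial.X + Polynomial.X ^ 2 : Polynomial ℤ) ^ (3 * N - 1) :
      Polynomial ℤ) : PowerSeries ℤ) =
      (1 - (X : PowerSeries ℤ) ^ 3) ^ (3 * N - 1) *
        (mk fun n => ((3 * N - 2 + n).choose (3 * N - 2) : ℤ)) := by
    push_cast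
    rw [show (1 - (X : PowerSeries ℤ) ^ 3) = (1 + X + X ^ 2) * (1 - X) by ring, mul_pow,
      mul_assoc, mul_comm ((1 - X) ^ _), h2, mul_one]
  rw [h3, aux_coeff, aux_restrict _ (fun j => coeff (3 * N - 1 - 3 * j)
    (mk fun n => ((3 * N - 2 + n).choose (3 * N - 2) : ℤ))) _ _ N (by omega)
    (by intro j; omega)]
  refine Finset.sum_congr rfl fun j hj => ?_
  have := Finset.mem_range.1 hj
  rw [coeff_mk, show 3 * N - 2 + (3 * N - 1 - 3 * j) = 6 * N - 3 - 3 * j by omega]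

lemma aux_DE (N i : ℕ) :
    ((3 * N + 3 * i + 2).choose (3 * N)) * ∏ l ∈ Finset.range (i + 1), ((3 * l + 1) * (3 * l + 2))
    = ((N + i).choose N) *
      ∏ l ∈ Finset.range (i + 1), ((3 * N + 3 * l + 1) * (3 * N + 3 * l + 2)) := by
  have key : ∀ n i : ℕ, (n + i + 1).choose n * (i + 1) = (n + i).choose n * (n + i + 1) := by
    intro n i
    have := Nat.choose_mul_succ_eq (n + i) n
    rw [show n + i + 1 - n = i + 1 by omega] at this
    linarith
  induction i with
  | zero =>
    have h1 : (3 * N + 1).choose (3 * N) = 3 * N + 1 := by simp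
    have h2 := key (3 * N) 1
    rw [h1] at h2
    simp only [mul_zero, add_zero, zero_add, Finset.prod_range_one, Nat.choose_self]
    linarith
  | succ i ih =>
    rw [Finset.prod_range_succ, Finset.prod_range_succ _ (i + 1)]
    have k0 : (3 * N + (3 * i + 3)).choose (3 * N) * (3 * i + 3) =
      (3 * N + (3 * i + 2)).choose (3 * N) * (3 * N + (3 * i + 3)) := key (3 * N) (3 * i + 2)
    have k1 : (3 * N + (3 * i + 4)).choose (3 * N) * (3 * i + 4) =
      (3 * N + (3 * i + 3)).choose (3 * N) * (3 * N + (3 * i + 4)) := key (3 * N) (3 * i + 3)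
    have k2 : (3 * N + (3 * i + 5)).choose (3 * N) * (3 * i + 5) =
      (3 * N + (3 * i + 4)).choose (3 * N) * (3 * N + (3 * i + 5)) := key (3 * N) (3 * i + 4)
    have k3 : (N + (i + 1)).choose N * (i + 1) = (N + i).choose N * (N + (i + 1)) := key N i
    rw [show 3 * N + 3 * (i + 1) + 2 = 3 * N + (3 * i + 5) by ring,
      show 3 * (i + 1) + 1 = 3 * i + 4 by ring, show 3 * (i + 1) + 2 = 3 * i + 5 by ring,
      show 3 * N + 3 * (i + 1) + 1 = 3 * N + (3 * i + 4) by ring]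
    rw [show 3 * N + 3 * i + 2 = 3 * N + (3 * i + 2) by ring] at ih
    generalize ∏ l ∈ Finset.range (i + 1), ((3 * l + 1) * (3 * l + 2)) = P at *
    generalize ∏ l ∈ Finset.range (i + 1), ((3 * N + 3 * l + 1) * (3 * N + 3 * l + 2)) = Q at *
    generalize (3 * N + (3 * i + 2)).choose (3 * N) = a0 at *
    generalize (3 * N + (3 * i + 3)).choose (3 * N) = a1 at *
    generalize (3 * N + (3 * i + 4)).choose (3 * N) = a2 at *
    generalize (3 * N + (3 * i + 5)).choose (3 * N) = a3 at *
    generalize (N + i).choose N = b0 at *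
    generalize (N + (i + 1)).choose N = b1 at *
    have hpos : 0 < 3 * i + 3 := by omega
    apply Nat.eq_of_mul_eq_mul_left hpos
    calc (3 * i + 3) * (a3 * (P * ((3 * i + 4) * (3 * i + 5))))
        = (a3 * (3 * i + 5)) * (3 * i + 4) * (3 * i + 3) * P := by ring
      _ = (a2 * (3 * i + 4)) * (3 * i + 3) * (3 * N + (3 * i + 5)) * P := by rw [k2]; ring
      _ = (a1 * (3 * i + 3)) * (3 * N + (3 * i + 4)) * (3 * N + (3 * i + 5)) * P := by
        rw [k1]; ring
      _ = (a0 * P) * (3 * N + (3 * i + 3)) * (3 * N + (3 * i + 4)) * (3 * N + (3 * i + 5)) := by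
        rw [k0]; ring
      _ = 3 * (b0 * (N + (i + 1))) * Q * (3 * N + (3 * i + 4)) * (3 * N + (3 * i + 5)) := by
        rw [ih]; ring
      _ = _ := by rw [← k3]; ring

lemma aux_cong (N i a : ℕ) (ha : 3 ^ a ∣ N) :
    ((3 : ℤ) ^ a) ∣ ((3 * N + 3 * i + 2).choose (3 * N) : ℤ) - ((N + i).choose N : ℤ) := by
  have h := aux_DE N i
  have hP : Nat.Coprime (3 ^ a)
      (∏ l ∈ Finset.range (i + 1), ((3 * l + 1) * (3 * l + 2))) := by
    apply Nat.Coprime.pow_left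
    apply Nat.Coprime.prod_right
    intro l _
    rw [Nat.Prime.coprime_iff_not_dvd Nat.prime_three, Nat.Prime.dvd_mul Nat.prime_three]
    omega
  have hQ : (∏ l ∈ Finset.range (i + 1), ((3 * N + 3 * l + 1) * (3 * N + 3 * l + 2))) ≡
      (∏ l ∈ Finset.range (i + 1), ((3 * l + 1) * (3 * l + 2))) [MOD 3 ^ a] := by
    apply Nat.ModEq.prod
    intro l _
    have h0 : 3 * N ≡ 0 [MOD 3 ^ a] := (Nat.modEq_zero_iff_dvd).2 (ha.mul_left 3)
    have h1 := h0.add_right (3 * l + 1)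
    have h2 := h0.add_right (3 * l + 2)
    simp only [zero_add, ← add_assoc] at h1 h2
    exact h1.mul h2
  have h5 : (3 * N + 3 * i + 2).choose (3 * N) ≡ (N + i).choose N [MOD 3 ^ a] := by
    apply Nat.ModEq.cancel_right_of_coprime hP
    rw [h]
    exact hQ.mul_left _
  have h6 := (Nat.modEq_iff_dvd.1 h5.symm)
  exact_mod_cast h6

lemma aux_fall (N a r : ℕ) (ha : 3 ^ a ∣ N) :
    (3 : ℤ) ^ a ∣ ∑ j ∈ Finset.range N, ((-1) ^ j * ((3 * N - 1).choose j : ℤ) *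
      ((2 * N - 1 - j).choose N : ℤ)) * (3 ^ r * (j.descFactorial r : ℤ)) := by
  rcases Nat.lt_or_ge r N with hr | hr
  swap
  · rw [Finset.sum_eq_zero]
    · exact dvd_zero _
    · intro j hj
      have := Finset.mem_range.1 hj
      rw [Nat.descFactorial_of_lt (by omega)]; simp
  obtain ⟨L, rfl⟩ : ∃ L, N = r + (L + 1) := ⟨N - r - 1, by omega⟩
  set N := r + (L + 1) with hN
  have hs : ∑ j ∈ Finset.range N, ((-1) ^ j * ((3 * N - 1).choose j : ℤ) *
      ((2 * N - 1 - j).choose N : ℤ)) * (3 ^ r * (j.descFactorial r : ℤ)) =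
      (3 ^ r * (-1) ^ r * ((3 * N - 1).descFactorial r : ℤ)) *
      ∑ j ∈ Finset.range (L + 1), (-1) ^ j * ((N + 1 + (N + L - 1)).choose j : ℤ) *
      ((N + (L - j)).choose N : ℤ) := by
    rw [hN, Finset.sum_range_add, ← hN, Finset.sum_eq_zero, zero_add, Finset.mul_sum]
    · refine Finset.sum_congr rfl fun j hj => ?_
      have hj' := Finset.mem_range.1 hj
      have e1 : 2 * N - 1 - (r + j) = N + (L - j) := by omega
      have e2 : ((3 * N - 1).choose (r + j)) * (r + j).descFactorial r =
          (3 * N - 1).descFactorial r * ((N + 1 + (N + L - 1)).choose j) := by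
        rw [Nat.descFactorial_eq_factorial_mul_choose, Nat.descFactorial_eq_factorial_mul_choose]
        have := Nat.choose_mul (n := 3 * N - 1) (k := r + j) (s := r) (by omega)
        rw [show r + j - r = j by omega, show 3 * N - 1 - r = N + 1 + (N + L - 1) by omega] at this
        calc _ = r.factorial * ((3 * N - 1).choose (r + j) * (r + j).choose r) := by ring
          _ = _ := by rw [this]; ring
      have e3 : ((3 * N - 1).choose (r + j) : ℤ) * ((r + j).descFactorial r : ℤ) =
          ((3 * N - 1).descFactorial r : ℤ) * ((N + 1 + (N + L - 1)).choose j : ℤ) := by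
        exact_mod_cast e2
      rw [e1]
      calc _ = (-1) ^ (r + j) * 3 ^ r * ((N + (L - j)).choose N : ℤ) *
          (((3 * N - 1).choose (r + j) : ℤ) * ((r + j).descFactorial r : ℤ)) := by ring
        _ = _ := by rw [e3]; ring
    · intro j hj
      have := Finset.mem_range.1 hj
      rw [Nat.descFactorial_of_lt (by omega)]; simp
  rw [hs, aux_conv _ _ _ (by omega)]
  suffices h : 3 ^ a ∣ 3 ^ r * (N + L - 1).choose L by
    have h' : (3 : ℤ) ^ a ∣ 3 ^ r * ((N + L - 1).choose L : ℤ) := by exact_mod_cast h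
    refine h'.trans ⟨(-1) ^ r * ((3 * N - 1).descFactorial r : ℤ) * (-1) ^ L, by ring⟩
  have h1 : (N + L) * (N + L - 1).choose L = (N + L).choose N * N := by
    have h2 := Nat.add_one_mul_choose_eq (N + L - 1) (N - 1)
    rw [show N + L - 1 + 1 = N + L by omega, show N - 1 + 1 = N by omega] at h2
    rw [← h2, ← Nat.choose_symm (n := N + L - 1) (k := L) (by omega),
      show N + L - 1 - L = N - 1 by omega]
  have h2 : 3 ^ a ∣ (N + L) * (N + L - 1).choose L := by
    rw [h1]; exact ha.mul_left _
  have h3 : 3 ^ a ∣ Nat.gcd (3 ^ a) (N + L) * (N + L - 1).choose L :=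
    (Nat.dvd_gcd_mul_iff_dvd_mul).2 h2
  obtain ⟨t, ht, hgt⟩ := (Nat.dvd_prime_pow Nat.prime_three).1 (Nat.gcd_dvd_left (3 ^ a) (N + L))
  rw [hgt] at h3
  refine h3.trans (Nat.mul_dvd_mul_right (pow_dvd_pow 3 ?_) _)
  have h4 : 3 ^ t ∣ N + L := hgt ▸ Nat.gcd_dvd_right _ _
  have h5 : 3 ^ t ∣ N := (pow_dvd_pow 3 ht).trans ha
  have h6 : 3 ^ t ∣ r + 1 := by
    have h7 : 3 ^ t ∣ (N + L) + (r + 1) := by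
      rw [show (N + L) + (r + 1) = 2 * N by omega]; exact h5.mul_left _
    exact (Nat.dvd_add_right h4).1 h7
  have h8 := Nat.le_of_dvd (by omega) h6
  have h9 : r + 1 < 3 ^ (r + 1) := Nat.lt_pow_self (by norm_num)
  have := (Nat.pow_lt_pow_iff_right (by norm_num : 1 < 3)).1 (h8.trans_lt h9)
  omega

lemma aux_poly_s8 (N : ℕ) (q : ℤ) (w : ℕ → ℤ) (A B : ℤ)
    (h : ∀ r, q ∣ ∑ j ∈ Finset.range N, w j * (3 ^ r * (j.descFactorial r : ℤ))) (k : ℕ) :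
    q ∣ ∑ j ∈ Finset.range N, w j * ((A - 3 * j) * (B - 3 * j)) ^ k := by
  have step : ∀ f : ℕ → ℤ,
      (∀ r, q ∣ ∑ j ∈ Finset.range N, f j * (3 ^ r * (j.descFactorial r : ℤ))) → ∀ A : ℤ,
      (∀ r, q ∣ ∑ j ∈ Finset.range N,
        ((A - 3 * j) * f j) * (3 ^ r * (j.descFactorial r : ℤ))) := by
    intro f hf A r
    have e : ∑ j ∈ Finset.range N, ((A - 3 * j) * f j) * (3 ^ r * (j.descFactorial r : ℤ)) =
        (A - 3 * r) * ∑ j ∈ Finset.range N, f j * (3 ^ r * (j.descFactorial r : ℤ)) -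
        ∑ j ∈ Finset.range N, f j * (3 ^ (r + 1) * (j.descFactorial (r + 1) : ℤ)) := by
      rw [Finset.mul_sum, ← Finset.sum_sub_distrib]
      refine Finset.sum_congr rfl fun j _ => ?_
      have : (j.descFactorial (r + 1) : ℤ) = (j - r) * (j.descFactorial r : ℤ) := by
        rcases Nat.lt_or_ge j r with hj | hj
        · rw [Nat.descFactorial_of_lt hj, Nat.descFactorial_of_lt (by omega)]; simp
        · rw [Nat.descFactorial_succ]; push_cast [Nat.cast_sub hj]; ring
      rw [this]; ring
    rw [e]
    exact dvd_sub ((hf r).mul_left _) (hf (r + 1))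
  have all : ∀ k r, q ∣ ∑ j ∈ Finset.range N,
      (w j * ((A - 3 * j) * (B - 3 * j)) ^ k) * (3 ^ r * (j.descFactorial r : ℤ)) := by
    intro k
    induction k with
    | zero => simpa using h
    | succ k ih =>
      intro r
      have := step _ (step _ ih B) A r
      convert this using 2
      ring
  simpa using all k 0

lemma aux_main (N a : ℕ) (hN : 0 < N) (ha : 3 ^ a ∣ N) :
    (3 : ℤ) ^ (2 * a + 1) ∣ ∑ j ∈ Finset.range N, (-1) ^ j * ((3 * N - 1).choose j : ℤ) *
        ((6 * N - 3 - 3 * j).choose (3 * N - 2) : ℤ) := by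
  obtain ⟨e, he⟩ : ∃ e, e + 1 = Nat.totient (3 ^ (2 * a + 1)) :=
    ⟨_, Nat.sub_add_cancel (Nat.totient_pos.2 (by positivity))⟩
  set u : ℕ → ℤ := fun j => ((6 * N - 2 : ℤ) - 3 * j) * ((6 * N - 1 : ℤ) - 3 * j) with hu
  -- Euler
  have hE : ∀ j, (3 : ℤ) ^ (2 * a + 1) ∣ 1 - u j ^ (e + 1) := by
    intro j
    have hc : IsCoprime (u j) ((3 : ℤ) ^ (2 * a + 1)) := by
      apply IsCoprime.pow_right
      apply IsCoprime.symm
      rw [Prime.coprime_iff_not_dvd Int.prime_three, Int.prime_three.dvd_mul]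
      omega
    obtain ⟨x, y, hxy⟩ := hc
    have hz : (x : ZMod (3 ^ (2 * a + 1))) * (u j : ZMod (3 ^ (2 * a + 1))) = 1 := by
      have h1 := congrArg (fun z : ℤ => (z : ZMod (3 ^ (2 * a + 1)))) hxy
      have h0 : (3 : ZMod (3 ^ (2 * a + 1))) ^ (2 * a + 1) = 0 := by
        exact_mod_cast ZMod.natCast_self (3 ^ (2 * a + 1))
      simp only [Int.cast_add, Int.cast_mul, Int.cast_pow, Int.cast_ofNat, Int.cast_one, h0,
        mul_zero, add_zero] at h1
      exact h1
    have ht := ZMod.pow_totient (Units.mkOfMulEqOne _ _ ((mul_comm _ _).trans hz))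
    have ht' := congrArg Units.val ht
    rw [Units.val_pow_eq_pow_val, Units.val_mkOfMulEqOne, Units.val_one, ← he] at ht'
    have h2 := (ZMod.intCast_zmod_eq_zero_iff_dvd (1 - u j ^ (e + 1)) (3 ^ (2 * a + 1))).1
      (by push_cast [ht']; exact sub_self _)
    exact_mod_cast h2
  -- binomial identity
  have hb : ∀ j ∈ Finset.range N, u j * ((6 * N - 3 - 3 * j).choose (3 * N - 2) : ℤ) =
      (3 * N * (3 * N - 1) : ℤ) * ((6 * N - 1 - 3 * j).choose (3 * N) : ℤ) := by
    intro j hj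
    have hj' := Finset.mem_range.1 hj
    obtain ⟨M, hM⟩ : ∃ M, 6 * N - 3 - 3 * j = M := ⟨_, rfl⟩
    obtain ⟨p, hp⟩ : ∃ p, 3 * N - 2 = p := ⟨_, rfl⟩
    rw [hM, hp, show 6 * N - 1 - 3 * j = M + 1 + 1 by omega]
    have hp3 : 3 * N = p + 1 + 1 := by omega
    rw [hp3]
    have hp3' : (3 * N : ℤ) = p + 2 := by exact_mod_cast hp3
    have hu' : u j = (M + 1) * (M + 2) := by
      have : (M : ℤ) = 6 * N - 3 - 3 * j := by omega
      rw [hu, this]; ring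
    rw [hu', hp3']
    have h1 : ((M + 1 : ℕ) : ℤ) * (M.choose p : ℤ) = ((M + 1).choose (p + 1) : ℤ) * ((p + 1 : ℕ) : ℤ) := by
      exact_mod_cast Nat.add_one_mul_choose_eq M p
    have h2 : ((M + 1 + 1 : ℕ) : ℤ) * ((M + 1).choose (p + 1) : ℤ) =
        ((M + 1 + 1).choose (p + 1 + 1) : ℤ) * ((p + 1 + 1 : ℕ) : ℤ) := by
      exact_mod_cast Nat.add_one_mul_choose_eq (M + 1) (p + 1)
    push_cast at h1 h2
    linear_combination (M + 2 : ℤ) * h1 + (p + 1 : ℤ) * h2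
  -- the reduced sum
  have hR : (3 : ℤ) ^ a ∣ ∑ j ∈ Finset.range N, (-1) ^ j * ((3 * N - 1).choose j : ℤ) *
      ((6 * N - 1 - 3 * j).choose (3 * N) : ℤ) * u j ^ e := by
    have h1 := aux_poly_s8 N ((3 : ℤ) ^ a) (fun j => (-1) ^ j * ((3 * N - 1).choose j : ℤ) *
      ((2 * N - 1 - j).choose N : ℤ)) (6 * N - 2) (6 * N - 1) (fun r => aux_fall N a r ha) e
    rw [← dvd_sub_left h1, ← Finset.sum_sub_distrib]
    refine Finset.dvd_sum fun j hj => ?_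
    have hj' := Finset.mem_range.1 hj
    have h2 := aux_cong N (N - 1 - j) a ha
    rw [show 3 * N + 3 * (N - 1 - j) + 2 = 6 * N - 1 - 3 * j by omega,
      show N + (N - 1 - j) = 2 * N - 1 - j by omega] at h2
    refine h2.trans ⟨(-1) ^ j * ((3 * N - 1).choose j : ℤ) * u j ^ e, ?_⟩
    simp only [hu]
    ring
  have hS : (3 : ℤ) ^ (2 * a + 1) ∣ ∑ j ∈ Finset.range N,
      (-1) ^ j * ((3 * N - 1).choose j : ℤ) *
        ((6 * N - 3 - 3 * j).choose (3 * N - 2) : ℤ) * u j ^ (e + 1) := by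
    have e1 : ∑ j ∈ Finset.range N,
      (-1) ^ j * ((3 * N - 1).choose j : ℤ) *
        ((6 * N - 3 - 3 * j).choose (3 * N - 2) : ℤ) * u j ^ (e + 1) =
        (3 * N * (3 * N - 1) : ℤ) * ∑ j ∈ Finset.range N, (-1) ^ j * ((3 * N - 1).choose j : ℤ) *
      ((6 * N - 1 - 3 * j).choose (3 * N) : ℤ) * u j ^ e := by
      rw [Finset.mul_sum]
      refine Finset.sum_congr rfl fun j hj => ?_
      have := hb j hj
      linear_combination ((-1) ^ j * ((3 * N - 1).choose j : ℤ) * u j ^ e) * this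
    rw [e1, show (3 : ℤ) ^ (2 * a + 1) = (3 * 3 ^ a) * 3 ^ a by ring]
    have haZ : (3 : ℤ) ^ a ∣ (N : ℤ) := by exact_mod_cast ha
    exact mul_dvd_mul ((mul_dvd_mul_left 3 haZ).mul_right _) hR
  rw [← dvd_sub_left hS, ← Finset.sum_sub_distrib]
  refine Finset.dvd_sum fun j _ => (hE j).trans
    ⟨(-1) ^ j * ((3 * N - 1).choose j : ℤ) *
        ((6 * N - 3 - 3 * j).choose (3 * N - 2) : ℤ), by ring⟩

theorem stmt_8 (n : ℕ) (hn : 0 < n) :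
    (3 : ℤ) ^ (2 * padicValNat 3 n - 1) ∣
      ∑ k ∈ Finset.range n,
        (-1) ^ k * (Nat.choose (n - 1) k : ℤ) * (Nat.choose (2 * k) k : ℤ) := by
  by_cases h3 : 3 ∣ n
  swap
  · rw [padicValNat.eq_zero_of_not_dvd h3]; simp
  obtain ⟨N, rfl⟩ := h3
  have hN : 0 < N := by omega
  have : Fact (Nat.Prime 3) := ⟨Nat.prime_three⟩
  have hv : padicValNat 3 (3 * N) = 1 + padicValNat 3 N := by
    rw [padicValNat.mul (by norm_num) (by omega), padicValNat_self]
  have h := aux_tri_s8 (3 * N - 1)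
  rw [show 3 * N - 1 + 1 = 3 * N by omega, aux_tri2 N hN] at h
  rw [h, hv, show 2 * (1 + padicValNat 3 N) - 1 = 2 * padicValNat 3 N + 1 by omega]
  exact (aux_main N _ hN pow_padicValNat_dvd).mul_left _
end
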